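/- arXiv:1005.2553 — 5 statements merged into one kernel-verified Lean document; each statement's English description precedes it below -/
import Mathlib

section
/- Let w be a word over the alphabet {x_0, x_1, x_2, …}. Then w has a conjugate (cyclic rotation) lying in ℬ if and only if ω(w) = 1. -/
/-- The weight of a word: the sum of `(a - 1)` over its letters, as an integer. -/
def wt (w : List ℕ) : ℤ := (w.map (fun a => (a : ℤ) - 1)).sum

/-- The set `ℬ` of words of weight 1 all of whose nonempty prefixes have positive weight. -/
def Bset : Set (List ℕ) :=
  {w | wt w = 1 ∧ ∀ j, 0 < j → j ≤ w.length → 0 < wt (w.take j)}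

/-! This is Raney's cycle lemma: rotate the word so that it starts just after the last position at
which its prefix sums are minimal. A prefix of the rotation that stays inside the tail of the word
has positive sum because the minimum was the last one. A prefix that wraps around gains the whole
(positive) sum of the word, which outweighs the comparison with an earlier prefix sum. -/

theorem exists_last_min_le {α : Type*} [LinearOrder α] (f : ℕ → α) (n : ℕ) :
    ∃ i ≤ n, (∀ k ≤ n, f i ≤ f k) ∧ ∀ k ≤ n, i < k → f i < f k := by
  induction n with
  | zero => exact ⟨0, le_rfl, fun k hk => by rw [Nat.le_zero.mp hk], by omega⟩
  | succ n ih =>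
    obtain ⟨i, hin, hmin, hlast⟩ := ih
    rcases le_or_gt (f (n + 1)) (f i) with hle | hlt
    · refine ⟨n + 1, le_rfl, fun k hk => ?_, by omega⟩
      rcases Nat.of_le_succ hk with hkn | rfl
      · exact hle.trans (hmin k hkn)
      · exact le_rfl
    · refine ⟨i, hin.trans n.le_succ, fun k hk => ?_, fun k hk hik => ?_⟩
      · rcases Nat.of_le_succ hk with hkn | rfl
        · exact hmin k hkn
        · exact hlt.le
      · rcases Nat.of_le_succ hk with hkn | rfl
        · exact hlast k hkn hik
        · exact hlt

theorem take_append_take_rotate {α : Type*} {l : List α} {i j : ℕ}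
    (hi : i ≤ l.length) (hj : j ≤ l.length) :
    l.take i ++ (l.rotate i).take j = l.take (i + j) ++ l.take (i + j - l.length) := by
  have hwrap : min (j - (l.length - i)) i = i + j - l.length := by omega
  rw [List.rotate_eq_drop_append_take hi, List.take_append, List.length_drop, List.take_take,
    hwrap, List.take_add, List.append_assoc]

/-- The condition that every nonempty prefix of a list has positive sum. As in `Bset`, a nonempty
prefix is encoded by its length. -/
def PosPrefixSums {M : Type*} [Add M] [Zero M] [LT M] (l : List M) : Prop :=
  ∀ j, 0 < j → j ≤ l.length → 0 < (l.take j).sum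

section CycleLemma

variable {M : Type*} [AddCommMonoid M] [LinearOrder M] [IsOrderedCancelAddMonoid M]

theorem exists_posPrefixSums_rotate {l : List M} (hl : 0 < l.sum) :
    ∃ i, PosPrefixSums (l.rotate i) := by
  obtain ⟨i, hi, hmin, hlast⟩ := exists_last_min_le (fun k => (l.take k).sum) l.length
  refine ⟨i, fun j hj hjl => ?_⟩
  rw [List.length_rotate] at hjl
  have hsum : (l.take i).sum + ((l.rotate i).take j).sum =
      (l.take (i + j)).sum + (l.take (i + j - l.length)).sum := by
    simpa only [List.sum_append] using congrArg List.sum (take_append_take_rotate hi hjl)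
  refine pos_of_lt_add_right (a := (l.take i).sum) ?_
  rw [hsum]
  rcases le_or_gt (i + j) l.length with hstay | hwrap
  · rw [Nat.sub_eq_zero_of_le hstay, List.take_zero, List.sum_nil, add_zero]
    exact hlast (i + j) hstay (by omega)
  · rw [List.take_of_length_le hwrap.le]
    exact (hmin (i + j - l.length) (by omega)).trans_lt (lt_add_of_pos_left _ hl)

theorem conjugate_mem_B_iff_general {s : M} (hs : 0 < s) (l : List M) :
    (∃ i, (l.rotate i).sum = s ∧ PosPrefixSums (l.rotate i)) ↔ l.sum = s := by
  have sum_rotate (i : ℕ) : (l.rotate i).sum = l.sum := (List.rotate_perm l i).sum_eq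
  simp only [sum_rotate, exists_and_left, and_iff_left_iff_imp]
  rintro rfl
  exact exists_posPrefixSums_rotate hs

end CycleLemma

/-- The weight `a - 1` of the letter `x_a`. It turns words into lists of integers, to which the
cycle lemma applies. -/
def letterWeight (a : ℕ) : ℤ := a - 1

-- In `wt` the cast elaborates on the whole list `w`, through the list monad, before the `map`.
theorem wt_eq_sum_map_letterWeight (w : List ℕ) : wt w = (w.map letterWeight).sum := by
  simp only [wt, List.bind_eq_flatMap, List.pure_def, ← List.map_eq_flatMap, List.map_map]
  rfl

theorem mem_Bset_iff (w : List ℕ) :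
    w ∈ Bset ↔ (w.map letterWeight).sum = 1 ∧ PosPrefixSums (w.map letterWeight) := by
  simp only [Bset, Set.mem_ofPred_eq, PosPrefixSums, wt_eq_sum_map_letterWeight, List.length_map,
    List.map_take]

/-- A word has a conjugate (cyclic rotation) in `ℬ` iff its weight is 1. -/
theorem conjugate_mem_B_iff (w : List ℕ) :
    (∃ i, w.rotate i ∈ Bset) ↔ wt w = 1 := by
  simp only [mem_Bset_iff, wt_eq_sum_map_letterWeight, List.map_rotate]
  exact conjugate_mem_B_iff_general one_pos (w.map letterWeight)
end

section
/- Let w be a word over the alphabet {x_0, x_1, x_2, …} of length n with ω(w) = 1. Then there is exactly one index i with 0 ≤ i < n such that the cyclic rotation of w by i positions lies in ℬ. -/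
/-! Cut `l` at the last point where its partial sums are minimal: `l = u ++ v`, where nonempty
prefixes of `v` have positive sum and suffixes of `u` have nonpositive sum. If `l` has positive sum,
then every nonempty prefix of `v ++ u` has positive sum: it is either a prefix of `v`, or obtained
from `v ++ u` by removing a suffix of `u`. For uniqueness, if `u ++ v` and `v ++ u` both have
positive prefix sums and `u`, `v` are nonempty, then `u.sum` and `v.sum` are positive, so the total
`u.sum + v.sum` is not a least positive element. -/

section Preorder

variable {M : Type*} [AddMonoid M] [Preorder M]

/-- A list is prefix-positive if all its nonempty prefixes have positive sum. For `ℬ` it is applied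
to the list of letter weights `a - 1`. -/
def PrefixPositive (l : List M) : Prop :=
  ∀ p, p <+: l → p ≠ [] → 0 < p.sum

theorem prefixPositive_iff_take {l : List M} :
    PrefixPositive l ↔ ∀ j, 0 < j → j ≤ l.length → 0 < (l.take j).sum := by
  constructor
  · intro h j hj hjl
    exact h _ (l.take_prefix j) (List.ne_nil_of_length_pos (by simp; omega))
  · intro h p hp hne
    rw [List.prefix_iff_eq_take.1 hp]
    exact h _ (List.length_pos_of_ne_nil hne) hp.length_le

namespace PrefixPositive

theorem nil : PrefixPositive ([] : List M) :=
  fun _ hp hne => absurd (List.prefix_nil.1 hp) hne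

theorem concat {l : List M} {a : M} (hl : PrefixPositive l) (ha : 0 < (l ++ [a]).sum) :
    PrefixPositive (l ++ [a]) := by
  intro p hp hne
  rcases List.prefix_concat_iff.1 hp with rfl | hp
  · exact ha
  · exact hl p hp hne

theorem sum_nonneg_of_prefix {l p : List M} (hl : PrefixPositive l) (hp : p <+: l) :
    0 ≤ p.sum := by
  rcases eq_or_ne p [] with rfl | hne
  · exact le_rfl
  · exact (hl p hp hne).le

theorem sum_nonpos_of_suffix_concat [AddRightMono M] {l t : List M} {a : M}
    (hl : PrefixPositive l) (ha : (l ++ [a]).sum ≤ 0) (ht : t <:+ l ++ [a]) : t.sum ≤ 0 := by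
  obtain ⟨p, hpt⟩ := ht
  rcases List.prefix_concat_iff.1 ⟨t, hpt⟩ with rfl | hp
  · obtain rfl : t = [] := by simpa using hpt
    exact le_rfl
  · calc
      t.sum ≤ p.sum + t.sum := le_add_of_nonneg_left (hl.sum_nonneg_of_prefix hp)
      _ = (l ++ [a]).sum := by rw [← hpt, List.sum_append]
      _ ≤ 0 := ha

theorem append_of_suffix_sum_nonpos [AddLeftMono M] {u v : List M} (hv : PrefixPositive v)
    (hu : ∀ t, t <:+ u → t.sum ≤ 0) (hsum : 0 < (v ++ u).sum) : PrefixPositive (v ++ u) := by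
  intro p hp hne
  rcases List.prefix_or_prefix_of_prefix hp (List.prefix_append v u) with hpv | ⟨q, rfl⟩
  · exact hv p hpv hne
  · obtain ⟨t, rfl⟩ := (List.prefix_append_right_inj v).1 hp
    calc
      0 < (v ++ (q ++ t)).sum := hsum
      _ = (v ++ q).sum + t.sum := by rw [← List.append_assoc, List.sum_append]
      _ ≤ (v ++ q).sum := add_le_of_nonpos_right (hu t (List.suffix_append q t))

theorem not_append_comm_of_covBy [AddLeftStrictMono M] {u v : List M}
    (huv : PrefixPositive (u ++ v)) (hsum : 0 ⋖ (u ++ v).sum) (hu : u ≠ []) (hv : v ≠ []) :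
    ¬ PrefixPositive (v ++ u) := by
  intro hvu
  have hu_pos : 0 < u.sum := huv u (List.prefix_append u v) hu
  have hv_pos : 0 < v.sum := hvu v (List.prefix_append v u) hv
  rw [List.sum_append] at hsum
  exact hsum.2 hu_pos (lt_add_of_pos_right _ hv_pos)

theorem not_rotate_of_covBy [AddLeftStrictMono M] {l : List M} (hl : PrefixPositive l)
    (hsum : 0 ⋖ l.sum) {j : ℕ} (hj_pos : 0 < j) (hj : j < l.length) :
    ¬ PrefixPositive (l.rotate j) := by
  rw [List.rotate_eq_drop_append_take hj.le]
  rw [← l.take_append_drop j] at hl hsum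
  exact hl.not_append_comm_of_covBy hsum
    (List.ne_nil_of_length_pos (by simp; omega)) (List.ne_nil_of_length_pos (by simp; omega))

end PrefixPositive

end Preorder

theorem exists_append_prefixPositive_and_suffix_sum_nonpos {M : Type*} [AddMonoid M]
    [LinearOrder M] [AddRightMono M] (l : List M) :
    ∃ u v, l = u ++ v ∧ PrefixPositive v ∧ ∀ t, t <:+ u → t.sum ≤ 0 := by
  induction l using List.reverseRecOn with
  | nil => exact ⟨[], [], rfl, .nil, fun t ht => by simp [List.suffix_nil.1 ht]⟩
  | append_singleton l a ih =>
    obtain ⟨u, v, rfl, hv, hu⟩ := ih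
    rcases lt_or_ge 0 (v ++ [a]).sum with ha | ha
    · exact ⟨u, v ++ [a], by simp, hv.concat ha, hu⟩
    · refine ⟨u ++ (v ++ [a]), [], by simp, .nil, fun t ht => ?_⟩
      rcases List.suffix_or_suffix_of_suffix ht (List.suffix_append u (v ++ [a])) with
        htv | ⟨s, rfl⟩
      · exact hv.sum_nonpos_of_suffix_concat ha htv
      · rw [List.sum_append]
        exact (add_le_of_nonpos_left (hu s (List.suffix_append_self_iff.1 ht))).trans ha

theorem exists_prefixPositive_rotate {M : Type*} [AddCommMonoid M] [LinearOrder M]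
    [IsOrderedAddMonoid M] {l : List M} (hl : 0 < l.sum) :
    ∃ i < l.length, PrefixPositive (l.rotate i) := by
  obtain ⟨u, v, rfl, hv, hu⟩ := exists_append_prefixPositive_and_suffix_sum_nonpos l
  have hv_ne : v ≠ [] := by
    rintro rfl
    exact (hu u List.suffix_rfl).not_gt (by simpa using hl)
  refine ⟨u.length, by simpa using List.length_pos_of_ne_nil hv_ne, ?_⟩
  rw [List.rotate_append_length_eq]
  exact hv.append_of_suffix_sum_nonpos hu (by rwa [List.perm_append_comm.sum_eq])

theorem prefixPositive_rotate_unique {M : Type*} [AddCommMonoid M] [Preorder M]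
    [AddLeftStrictMono M] {l : List M} (hl : 0 ⋖ l.sum) {i j : ℕ}
    (hi : i < l.length) (hj : j < l.length) (hli : PrefixPositive (l.rotate i))
    (hlj : PrefixPositive (l.rotate j)) : i = j := by
  wlog hij : i ≤ j generalizing i j
  · exact (this hj hi hlj hli (le_of_not_ge hij)).symm
  by_contra hne
  have hsum : 0 ⋖ (l.rotate i).sum := by rwa [(l.rotate_perm i).sum_eq]
  refine hli.not_rotate_of_covBy hsum (j := j - i) (by omega) (by simp; omega) ?_
  rwa [List.rotate_rotate, Nat.add_sub_cancel' hij]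

theorem unique_rotation_mem_B_general {M : Type*} [AddCommMonoid M] [LinearOrder M]
    [IsOrderedCancelAddMonoid M] (l : List M) (hl : 0 ⋖ l.sum) :
    ∃! i : ℕ, i < l.length ∧ PrefixPositive (l.rotate i) := by
  obtain ⟨i, hi, hli⟩ := exists_prefixPositive_rotate hl.lt
  exact ⟨i, ⟨hi, hli⟩, fun j ⟨hj, hlj⟩ => prefixPositive_rotate_unique hl hj hi hlj hli⟩

-- In `wt`, the list `w` itself is coerced to `List ℤ`, through the list monad, before the map.
theorem wt_eq_sum_map (w : List ℕ) : wt w = (w.map fun a : ℕ => (a : ℤ) - 1).sum := by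
  simp [wt, ← List.map_eq_flatMap, Function.comp_def]

theorem wt_rotate (w : List ℕ) (i : ℕ) : wt (w.rotate i) = wt w := by
  simp only [wt_eq_sum_map, ((w.rotate_perm i).map _).sum_eq]

theorem mem_Bset_iff_s1 {w : List ℕ} :
    w ∈ Bset ↔ wt w = 1 ∧ PrefixPositive (w.map fun a : ℕ => (a : ℤ) - 1) := by
  simp only [Bset, Set.mem_ofPred_eq, wt_eq_sum_map, prefixPositive_iff_take, List.length_map,
    List.map_take]

/-- If `w` has weight 1, there is exactly one rotation amount `i` with `0 ≤ i < length w`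
such that the cyclic rotation of `w` by `i` lies in `ℬ`. -/
theorem unique_rotation_mem_B (w : List ℕ) (hw : wt w = 1) :
    ∃! i : ℕ, i < w.length ∧ w.rotate i ∈ Bset := by
  have hsum : 0 ⋖ (w.map fun a : ℕ => (a : ℤ) - 1).sum := by
    rw [← wt_eq_sum_map, hw, Order.covBy_iff_add_one_eq, zero_add]
  simpa [mem_Bset_iff_s1, wt_rotate, hw] using unique_rotation_mem_B_general _ hsum
end

section
/- Let w ∈ ℬ have length n. Then for every i with 0 < i < n, the cyclic rotation of w by i positions is different from w; consequently the conjugacy class of w has exactly n elements. -/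
/-!
If a word `w` of length `n` equals its rotation by `i ≤ n` letters, then its prefix `u` of length
`i` commutes with `w`, so in additive notation `n • u` and `i • w` are commuting words of the same
length and hence equal. Any additive weight `φ` therefore satisfies `n * φ u = i * φ w`. If `φ w` is
a unit of `ℤ`, this forces `n ∣ i`.
-/

section Rotations

variable {α : Type*} {w : List α}

theorem freeAddMonoid_length_nsmul (k : ℕ) (u : FreeAddMonoid α) :
    (k • u).length = k * u.length := by
  induction k with
  | zero => rw [zero_nsmul, FreeAddMonoid.length_zero, zero_mul]
  | succ k ih => rw [succ_nsmul, FreeAddMonoid.length_add, ih, Nat.succ_mul]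

theorem length_nsmul_eq_of_addCommute {u v : FreeAddMonoid α} (h : AddCommute u v) :
    v.length • u = u.length • v := by
  have same_length : (v.length • u).length = (u.length • v).length := by
    rw [freeAddMonoid_length_nsmul, freeAddMonoid_length_nsmul, mul_comm]
  exact List.append_inj_left (h.nsmul_nsmul v.length u.length) same_length

theorem addCommute_take_of_rotate_eq_self {i : ℕ} (hi : i ≤ w.length) (h : w.rotate i = w) :
    AddCommute (FreeAddMonoid.ofList (w.take i)) (FreeAddMonoid.ofList w) := by
  have append_comm : w.take i ++ w = w ++ w.take i :=
    calc
      w.take i ++ w = w.take i ++ (w.drop i ++ w.take i) := by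
        rw [← List.rotate_eq_drop_append_take hi, h]
      _ = w ++ w.take i := by rw [← List.append_assoc, List.take_append_drop]
  exact append_comm

theorem length_nsmul_sum_map_take_of_rotate_eq_self {M : Type*} [AddMonoid M] (φ : α → M) {i : ℕ}
    (hi : i ≤ w.length) (h : w.rotate i = w) :
    w.length • ((w.take i).map φ).sum = i • (w.map φ).sum := by
  have nsmul_take := length_nsmul_eq_of_addCommute (addCommute_take_of_rotate_eq_self hi h)
  simpa only [map_nsmul, FreeAddMonoid.lift_apply, FreeAddMonoid.length,
    FreeAddMonoid.toList_ofList, List.length_take_of_le hi] using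
    congrArg (FreeAddMonoid.lift φ) nsmul_take

theorem rotate_ne_self_of_isUnit_sum_map (φ : α → ℤ) (hw : IsUnit (w.map φ).sum) {i : ℕ}
    (hi_pos : 0 < i) (hi : i < w.length) : w.rotate i ≠ w := by
  intro h
  have length_dvd_mul : (w.length : ℤ) ∣ i * (w.map φ).sum :=
    ⟨((w.take i).map φ).sum, by
      simpa only [nsmul_eq_mul] using
        (length_nsmul_sum_map_take_of_rotate_eq_self φ hi.le h).symm⟩
  have length_dvd : w.length ∣ i :=
    Int.natCast_dvd_natCast.1 (hw.dvd_mul_right.1 length_dvd_mul)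
  exact Nat.not_dvd_of_pos_of_lt hi_pos hi length_dvd

theorem injOn_rotate (h : ∀ i, 0 < i → i < w.length → w.rotate i ≠ w) :
    Set.InjOn w.rotate (Set.Iio w.length) := by
  have rotate_ne {i j : ℕ} (hij : i < j) (hj : j < w.length) : w.rotate i ≠ w.rotate j := by
    intro heq
    refine h (j - i) (Nat.sub_pos_of_lt hij) (by lia) (List.rotate_injective i ?_)
    simp only [List.rotate_rotate, Nat.sub_add_cancel hij.le, heq]
  intro i hi j hj heq
  by_contra hne
  rcases lt_or_gt_of_ne hne with hij | hji
  · exact rotate_ne hij hj heq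
  · exact rotate_ne hji hi heq.symm

theorem range_rotate_eq_image_Iio (hw : w ≠ []) :
    Set.range w.rotate = w.rotate '' Set.Iio w.length := by
  refine (Set.range_subset_iff.2 fun i => ?_).antisymm (Set.image_subset_range _ _)
  exact ⟨i % w.length, Nat.mod_lt _ (List.length_pos_iff.2 hw), List.rotate_mod w i⟩

theorem ncard_range_rotate (hw : w ≠ []) (h : ∀ i, 0 < i → i < w.length → w.rotate i ≠ w) :
    (Set.range w.rotate).ncard = w.length := by
  rw [range_rotate_eq_image_Iio hw, (injOn_rotate h).ncard_image, Set.ncard_eq_toFinset_card',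
    Set.toFinset_Iio, Nat.card_Iio]

end Rotations

theorem rotations_distinct_of_mem_B_general {α : Type*} (φ : α → ℤ) (w : List α)
    (hw : IsUnit (w.map φ).sum) :
    (∀ i, 0 < i → i < w.length → w.rotate i ≠ w) ∧
      Set.ncard {u : List α | ∃ i, w.rotate i = u} = w.length := by
  have rotate_ne : ∀ i, 0 < i → i < w.length → w.rotate i ≠ w :=
    fun _ => rotate_ne_self_of_isUnit_sum_map φ hw
  have w_ne_nil : w ≠ [] := by
    rintro rfl
    exact not_isUnit_zero hw
  exact ⟨rotate_ne, ncard_range_rotate w_ne_nil rotate_ne⟩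

/-- If `w ∈ ℬ`, then every nontrivial cyclic rotation of `w` differs from `w`; consequently
the conjugacy class of `w` has exactly `length w` elements. -/
theorem rotations_distinct_of_mem_B (w : List ℕ) (hw : w ∈ Bset) :
    (∀ i, 0 < i → i < w.length → w.rotate i ≠ w) ∧
      Set.ncard {u : List ℕ | ∃ i, w.rotate i = u} = w.length := by
  have sum_eq_one := (wt_eq_sum_map w).symm.trans hw.1
  exact rotations_distinct_of_mem_B_general _ w (Int.isUnit_iff.2 (.inl sum_eq_one))
end

section
/- (Kreweras) Let n ≥ 1 and let r = (r_1, …, r_n) ∈ ℕ^n satisfy r_1 + 2r_2 + ⋯ + n·r_n = n, and set |r| = r_1 + ⋯ + r_n. Then the number N of noncrossing set partitions of [n] of type r satisfies N · (n − |r| + 1)! · r_1! r_2! ⋯ r_n! = n!. -/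
/-- A set partition of `[n] = {1, …, n}`, encoded as a `Finpartition` of `Finset.Icc 1 n`. -/
abbrev SetPartitionOn (n : ℕ) := Finpartition (Finset.Icc 1 n)

/-- `π` has type `r = (r_1, …, r_n)` if for each `i` the number of blocks of size `i` is `r_i`. -/
def HasType {n : ℕ} (π : SetPartitionOn n) (r : Fin n → ℕ) : Prop :=
  ∀ i : Fin n, (π.parts.filter (fun B => B.card = i.1 + 1)).card = r i

/-- `π` is noncrossing: there are no `a < b < c < d` with `a, c` in one block and
`b, d` in a different block. -/
def Noncrossing {n : ℕ} (π : SetPartitionOn n) : Prop :=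
  ¬ ∃ a b c d : ℕ, a < b ∧ b < c ∧ c < d ∧
      ∃ B ∈ π.parts, ∃ B' ∈ π.parts, B ≠ B' ∧ a ∈ B ∧ c ∈ B ∧ b ∈ B' ∧ d ∈ B'

/-- `(i, j)` is an arc of `π`: `i < j` lie in a common block with no element of that
block strictly between them. -/
def IsArc {n : ℕ} (π : SetPartitionOn n) (i j : ℕ) : Prop :=
  i < j ∧ ∃ B ∈ π.parts, i ∈ B ∧ j ∈ B ∧ ∀ k ∈ B, ¬ (i < k ∧ k < j)

/-- `π` is nonnesting: there are no arcs `(a, d)` and `(b, c)` with `a < b < c < d`. -/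
def Nonnesting {n : ℕ} (π : SetPartitionOn n) : Prop :=
  ¬ ∃ a b c d : ℕ, a < b ∧ b < c ∧ c < d ∧ IsArc π a d ∧ IsArc π b c

/-- `i ∈ {1, …, n-1}` is a cut of `π` if no block contains both an element `≤ i` and an
element `> i`. -/
def IsCut {n : ℕ} (π : SetPartitionOn n) (i : ℕ) : Prop :=
  1 ≤ i ∧ i ≤ n - 1 ∧ ∀ B ∈ π.parts, (∀ x ∈ B, x ≤ i) ∨ (∀ x ∈ B, i < x)

/-- `π` is connected if it has no cuts. -/
def Connected {n : ℕ} (π : SetPartitionOn n) : Prop := ∀ i, ¬ IsCut π i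

/-- The number of cuts of `π`; `π` has exactly `m` connected components iff this is `m - 1`. -/
noncomputable def cutCount {n : ℕ} (π : SetPartitionOn n) : ℕ := Set.ncard {i : ℕ | IsCut π i}

/-!
Remove from a noncrossing partition of an `m`-element set the block of the largest point. Going on
like this produces noncrossing families that leave some points uncovered, but never a point that
lies between two points of the same block. In such a family the block of the largest point consists
of that point and the largest points left uncovered by the other blocks, so it can be recovered
from its size. Hence the number `f m M` of these families with multiset of block sizes `M`
satisfies `f (m + 1) M = f m M + ∑ c, f m (M - {c})`, where `c` runs over the distinct elements
of `M`, with solution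
`f m M = (m + 1 - M.sum) * m! / ((m + 1 - M.card)! * ∏ c, (M.count c)!)`. The noncrossing
partitions are the families with `M.sum = m`.
-/

open Finset
open scoped Nat

section FinalSegment

variable {α : Type*} [LinearOrder α] {F T T' : Finset α}

/-- `T` is a final segment of the finite set `F`, i.e. it consists of the largest `#T` elements
of `F`. -/
structure IsFinalSegment (T F : Finset α) : Prop where
  subset : T ⊆ F
  mem_of_lt : ∀ ⦃x⦄, x ∈ F → ∀ ⦃y⦄, y ∈ T → y < x → x ∈ T

theorem IsFinalSegment.subset_or_subset (hT : IsFinalSegment T F) (hT' : IsFinalSegment T' F) :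
    T ⊆ T' ∨ T' ⊆ T := by
  by_contra! h
  obtain ⟨x, hx, hx'⟩ := not_subset.1 h.1
  obtain ⟨y, hy, hy'⟩ := not_subset.1 h.2
  rcases lt_trichotomy x y with hxy | rfl | hyx
  · exact hy' (hT.mem_of_lt (hT'.subset hy) hx hxy)
  · exact hx' hy
  · exact hx' (hT'.mem_of_lt (hT.subset hx) hy hyx)

theorem IsFinalSegment.eq_of_card_eq (hT : IsFinalSegment T F) (hT' : IsFinalSegment T' F)
    (h : #T = #T') : T = T' :=
  (hT.subset_or_subset hT').elim (fun hs => eq_of_subset_of_card_le hs h.ge)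
    fun hs => (eq_of_subset_of_card_le hs h.le).symm

theorem exists_isFinalSegment_card_eq {k : ℕ} (hk : k ≤ #F) : ∃ T, IsFinalSegment T F ∧ #T = k := by
  induction F using Finset.induction_on_min with
  | empty => exact ⟨∅, ⟨by simp, by simp⟩, by simp_all⟩
  | insert m F hm ih =>
    rcases hk.eq_or_lt with rfl | hk
    · exact ⟨_, ⟨Subset.rfl, fun _ hx _ _ _ => hx⟩, rfl⟩
    · rw [card_insert_of_notMem fun h => (hm m h).false, Nat.lt_succ_iff] at hk
      obtain ⟨T, hT, hTk⟩ := ih hk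
      refine ⟨T, ⟨hT.subset.trans (subset_insert _ _), fun x hx y hy hyx => ?_⟩, hTk⟩
      rcases mem_insert.1 hx with rfl | hx
      · exact absurd hyx (hm y (hT.subset hy)).not_gt
      · exact hT.mem_of_lt hx hy hyx

end FinalSegment

section Family

variable {α : Type*} [DecidableEq α] {s : Finset α} {P : Finset (Finset α)} {a : α}

/-- The points of `s` that lie in no member of the family `P`. -/
def uncovered (s : Finset α) (P : Finset (Finset α)) : Finset α := s \ P.biUnion id

theorem mem_uncovered {x : α} : x ∈ uncovered s P ↔ x ∈ s ∧ ∀ B ∈ P, x ∉ B := by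
  simp [uncovered]

theorem sum_card_add_card_uncovered (hs : ∀ B ∈ P, B ⊆ s)
    (hP : (P : Set (Finset α)).PairwiseDisjoint id) :
    (P.val.map card).sum + #(uncovered s P) = #s := by
  have hcover : #(P.biUnion id) = (P.val.map card).sum := card_biUnion hP
  rw [← hcover, uncovered, add_comm]
  exact card_sdiff_add_card_eq_card (biUnion_subset.2 hs)

theorem filter_notMem_eq_erase {B : Finset α} (hP : (P : Set (Finset α)).PairwiseDisjoint id)
    (hB : B ∈ P) (ha : a ∈ B) : {B' ∈ P | a ∉ B'} = P.erase B := by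
  ext B'
  rw [mem_filter, mem_erase, and_comm, and_congr_left]
  exact fun hB' => ⟨fun h e => h (e ▸ ha), fun hne h => hne (hP.elim_finset hB' hB a h ha)⟩

end Family

section GaplessNoncrossing

variable {α : Type*} [LinearOrder α] {s T B : Finset α} {P : Finset (Finset α)} {a : α}
  {M : Multiset ℕ} {c : ℕ}

/-- `P` is a noncrossing partition of a subset of `s` such that no point of `s` between two points
of a common block is left uncovered. These are the families that arise from noncrossing partitions
by repeatedly deleting the block of the largest point. Empty blocks are allowed; where this matters
they are excluded by `0 ∉ M` for the multiset `M` of block sizes. -/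
structure IsGaplessNoncrossing (s : Finset α) (P : Finset (Finset α)) : Prop where
  subset : ∀ B ∈ P, B ⊆ s
  pairwiseDisjoint : (P : Set (Finset α)).PairwiseDisjoint id
  eq_of_crossing : ∀ ⦃B⦄, B ∈ P → ∀ ⦃B'⦄, B' ∈ P → ∀ ⦃w x y z⦄, w < x → x < y → y < z →
    w ∈ B → y ∈ B → x ∈ B' → z ∈ B' → B = B'
  exists_mem_of_between : ∀ ⦃B⦄, B ∈ P → ∀ ⦃x y z⦄, x ∈ B → z ∈ B → y ∈ s → x < y → y < z →
    ∃ B' ∈ P, y ∈ B'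

namespace IsGaplessNoncrossing

theorem not_lt_of_mem_uncovered {x y z : α} (h : IsGaplessNoncrossing s P)
    (hy : y ∈ uncovered s P) (hB : B ∈ P) (hx : x ∈ B) (hz : z ∈ B) (hxy : x < y) : ¬ y < z :=
  fun hyz => by
    obtain ⟨hys, hyP⟩ := mem_uncovered.1 hy
    obtain ⟨B', hB', hyB'⟩ := h.exists_mem_of_between hB hx hz hys hxy hyz
    exact hyP B' hB' hyB'

theorem erase_of_forall_le (h : IsGaplessNoncrossing s P) (hB : B ∈ P) (ha : a ∈ B)
    (hmax : ∀ x ∈ s, x ≤ a) : IsGaplessNoncrossing s (P.erase B) where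
  subset B' hB' := h.subset B' (mem_of_mem_erase hB')
  pairwiseDisjoint := h.pairwiseDisjoint.subset (mod_cast erase_subset B P)
  eq_of_crossing _ hB' _ hB'' := h.eq_of_crossing (mem_of_mem_erase hB') (mem_of_mem_erase hB'')
  exists_mem_of_between B' hB' x y z hx hz hy hxy hyz := by
    obtain ⟨hne, hB'P⟩ := mem_erase.1 hB'
    obtain ⟨B'', hB'', hyB''⟩ := h.exists_mem_of_between hB'P hx hz hy hxy hyz
    refine ⟨B'', mem_erase.2 ⟨?_, hB''⟩, hyB''⟩
    rintro rfl
    rcases (hmax z (h.subset B' hB'P hz)).eq_or_lt with rfl | hza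
    · exact hne (h.pairwiseDisjoint.elim_finset hB'P hB z hz ha)
    · exact hne (h.eq_of_crossing hB'P hB hxy hyz hza hx hz hyB'' ha)

theorem insert_iff (hmax : ∀ x ∈ s, x < a) :
    IsGaplessNoncrossing s P ↔ IsGaplessNoncrossing (insert a s) P ∧ ∀ B ∈ P, a ∉ B := by
  constructor
  · refine fun h => ⟨{ h with
      subset := fun B hB => (h.subset B hB).trans (subset_insert a s)
      exists_mem_of_between := fun B hB x y z hx hz hy hxy hyz => ?_ },
      fun B hB haB => (hmax a (h.subset B hB haB)).false⟩
    have hya : y ≠ a := (hyz.trans (hmax z (h.subset B hB hz))).ne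
    exact h.exists_mem_of_between hB hx hz (mem_of_mem_insert_of_ne hy hya) hxy hyz
  · rintro ⟨h, haP⟩
    exact { h with
      subset := fun B hB => (subset_insert_iff_of_notMem (haP B hB)).1 (h.subset B hB)
      exists_mem_of_between := fun B hB x y z hx hz hy =>
        h.exists_mem_of_between hB hx hz (mem_insert_of_mem hy) }

theorem erase_block (hmax : ∀ x ∈ s, x < a) (h : IsGaplessNoncrossing (insert a s) P)
    (hB : B ∈ P) (ha : a ∈ B) : IsGaplessNoncrossing s (P.erase B) := by
  refine (insert_iff hmax).2 ⟨h.erase_of_forall_le hB ha ?_, fun B' hB' haB' => ?_⟩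
  · exact forall_mem_insert .. |>.2 ⟨le_rfl, fun x hx => (hmax x hx).le⟩
  · obtain ⟨hne, hB'⟩ := mem_erase.1 hB'
    exact hne (h.pairwiseDisjoint.elim_finset hB' hB a haB' ha)

theorem isFinalSegment_erase (hmax : ∀ x ∈ s, x < a) (h : IsGaplessNoncrossing (insert a s) P)
    (hB : B ∈ P) (ha : a ∈ B) : IsFinalSegment (B.erase a) (uncovered s (P.erase B)) where
  subset x hx := by
    obtain ⟨hxa, hxB⟩ := mem_erase.1 hx
    refine mem_uncovered.2 ⟨mem_of_mem_insert_of_ne (h.subset B hB hxB) hxa, fun B' hB' hxB' => ?_⟩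
    obtain ⟨hne, hB'⟩ := mem_erase.1 hB'
    exact hne (h.pairwiseDisjoint.elim_finset hB' hB x hxB' hxB)
  mem_of_lt x hx y hy hyx := by
    obtain ⟨hxs, hxP⟩ := mem_uncovered.1 hx
    have hxa := hmax x hxs
    obtain ⟨B', hB', hxB'⟩ := h.exists_mem_of_between hB (mem_of_mem_erase hy) ha
      (mem_insert_of_mem hxs) hyx hxa
    have hBB' : B' = B := by_contra fun hne => hxP B' (mem_erase.2 ⟨hne, hB'⟩) hxB'
    exact mem_erase.2 ⟨hxa.ne, hBB' ▸ hxB'⟩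

theorem insert_block (hmax : ∀ x ∈ s, x < a) (h : IsGaplessNoncrossing s P)
    (hT : IsFinalSegment T (uncovered s P)) :
    IsGaplessNoncrossing (insert a s) (insert (insert a T) P) := by
  have hTs : ∀ x ∈ T, x ∈ s := fun x hx => (mem_uncovered.1 (hT.subset hx)).1
  have hnew : ∀ x ∈ insert a T, ∀ B ∈ P, x ∉ B := by
    intro x hx B hB hxB
    rcases mem_insert.1 hx with rfl | hx
    · exact (hmax x (h.subset B hB hxB)).false
    · exact (mem_uncovered.1 (hT.subset hx)).2 B hB hxB
  have hbetween : ∀ y ∈ insert a T, ∀ B ∈ P, ∀ x ∈ B, ∀ z ∈ B, x < y → ¬ y < z := by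
    intro y hy B hB x hx z hz hxy
    rcases mem_insert.1 hy with rfl | hyT
    · exact (hmax z (h.subset B hB hz)).not_gt
    · exact h.not_lt_of_mem_uncovered (hT.subset hyT) hB hx hz hxy
  refine ⟨?_, ?_, ?_, ?_⟩
  · exact forall_mem_insert .. |>.2 ⟨insert_subset_insert a hTs,
      fun B hB => (h.subset B hB).trans (subset_insert a s)⟩
  · rw [coe_insert]
    refine h.pairwiseDisjoint.insert fun B hB _ => ?_
    exact disjoint_left.2 fun x hx => hnew x hx B hB
  · intro B hB B' hB' w x y z hwx hxy hyz hw hy hx hz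
    rcases mem_insert.1 hB with rfl | hB <;> rcases mem_insert.1 hB' with rfl | hB'
    · rfl
    · exact absurd hyz (hbetween y hy B' hB' x hx z hz hxy)
    · exact absurd hxy (hbetween x hx B hB w hw y hy hwx)
    · exact h.eq_of_crossing hB hB' hwx hxy hyz hw hy hx hz
  · intro B hB x y z hx hz hy hxy hyz
    by_cases hyP : ∃ B' ∈ P, y ∈ B'
    · obtain ⟨B', hB', hyB'⟩ := hyP
      exact ⟨B', mem_insert_of_mem hB', hyB'⟩
    · refine ⟨insert a T, mem_insert_self _ _, ?_⟩
      rcases mem_insert.1 hy with rfl | hys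
      · exact mem_insert_self _ _
      have hyuncovered : y ∈ uncovered s P :=
        mem_uncovered.2 ⟨hys, fun B' hB' hyB' => hyP ⟨B', hB', hyB'⟩⟩
      rcases mem_insert.1 hB with rfl | hB
      · have hxT : x ∈ T := mem_of_mem_insert_of_ne hx (hxy.trans (hmax y hys)).ne
        exact mem_insert_of_mem (hT.mem_of_lt hyuncovered hxT hxy)
      · exact absurd hyz (h.not_lt_of_mem_uncovered hyuncovered hB hx hz hxy)

end IsGaplessNoncrossing

open Classical in
/-- The gapless noncrossing families in `s` with multiset of block sizes `M`. -/
noncomputable def gaplessNoncrossing (s : Finset α) (M : Multiset ℕ) :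
    Finset (Finset (Finset α)) :=
  {P ∈ s.powerset.powerset | IsGaplessNoncrossing s P ∧ P.val.map card = M}

theorem mem_gaplessNoncrossing :
    P ∈ gaplessNoncrossing s M ↔ IsGaplessNoncrossing s P ∧ P.val.map card = M := by
  simp only [gaplessNoncrossing, mem_filter, mem_powerset, and_iff_right_iff_imp]
  exact fun h B hB => mem_powerset.2 (h.1.subset B hB)

theorem sum_add_card_uncovered (hP : P ∈ gaplessNoncrossing s M) :
    M.sum + #(uncovered s P) = #s := by
  obtain ⟨h, rfl⟩ := mem_gaplessNoncrossing.1 hP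
  exact sum_card_add_card_uncovered h.subset h.pairwiseDisjoint

theorem gaplessNoncrossing_eq_empty (h : #s < M.sum) : gaplessNoncrossing s M = ∅ :=
  eq_empty_of_forall_notMem fun _ hP => by
    have := sum_add_card_uncovered hP
    omega

theorem erase_mem_gaplessNoncrossing (hmax : ∀ x ∈ s, x < a)
    (hP : P ∈ gaplessNoncrossing (insert a s) M) (hB : B ∈ P) (ha : a ∈ B) :
    P.erase B ∈ gaplessNoncrossing s (M.erase #B) := by
  obtain ⟨h, rfl⟩ := mem_gaplessNoncrossing.1 hP
  refine mem_gaplessNoncrossing.2 ⟨h.erase_block hmax hB ha, ?_⟩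
  rw [erase_val, Multiset.map_erase_of_mem _ _ hB]

theorem insert_mem_gaplessNoncrossing (hmax : ∀ x ∈ s, x < a) (hP : P ∈ gaplessNoncrossing s M)
    (hT : IsFinalSegment T (uncovered s P)) :
    insert (insert a T) P ∈ gaplessNoncrossing (insert a s) (#(insert a T) ::ₘ M) := by
  obtain ⟨h, rfl⟩ := mem_gaplessNoncrossing.1 hP
  refine mem_gaplessNoncrossing.2 ⟨h.insert_block hmax hT, ?_⟩
  have hTP : insert a T ∉ P := fun hmem =>
    (hmax a (h.subset _ hmem (mem_insert_self a T))).false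
  rw [insert_val_of_notMem hTP, Multiset.map_cons]

/-- If the largest point `a` lies in a block of size `c`, then the other points of that block are
the `c - 1` largest points left uncovered by the remaining blocks. -/
theorem card_filter_exists_mem_card_eq (hmax : ∀ x ∈ s, x < a) (hc : c ∈ M) (hc0 : c ≠ 0)
    (hM : M.sum ≤ #s + 1) :
    #{P ∈ gaplessNoncrossing (insert a s) M | ∃ B ∈ P, a ∈ B ∧ #B = c} =
      #(gaplessNoncrossing s (M.erase c)) := by
  have hdisj : ∀ {P}, P ∈ gaplessNoncrossing (insert a s) M →
      (P : Set (Finset α)).PairwiseDisjoint id := fun hP =>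
    (mem_gaplessNoncrossing.1 hP).1.pairwiseDisjoint
  refine card_bij (fun P _ => {B ∈ P | a ∉ B}) ?_ ?_ ?_
  · intro P hP
    obtain ⟨hP, B, hB, ha, hBc⟩ := mem_filter.1 hP
    rw [filter_notMem_eq_erase (hdisj hP) hB ha, ← hBc]
    exact erase_mem_gaplessNoncrossing hmax hP hB ha
  · intro P hP P' hP' heq
    obtain ⟨hP, B, hB, ha, hBc⟩ := mem_filter.1 hP
    obtain ⟨hP', B', hB', ha', hBc'⟩ := mem_filter.1 hP'
    rw [filter_notMem_eq_erase (hdisj hP) hB ha, filter_notMem_eq_erase (hdisj hP') hB' ha'] at heq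
    have hT := (mem_gaplessNoncrossing.1 hP).1.isFinalSegment_erase hmax hB ha
    have hT' := (mem_gaplessNoncrossing.1 hP').1.isFinalSegment_erase hmax hB' ha'
    rw [← heq] at hT'
    have hrest : B.erase a = B'.erase a := hT.eq_of_card_eq hT' <| by
      rw [card_erase_of_mem ha, card_erase_of_mem ha', hBc, hBc']
    have hBB' : B = B' := by rw [← insert_erase ha, hrest, insert_erase ha']
    rw [← insert_erase hB, heq, hBB', insert_erase hB']
  · intro Q hQ
    have hsum : c + (M.erase c).sum = M.sum := Multiset.sum_erase hc
    have huncovered := sum_add_card_uncovered hQ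
    obtain ⟨T, hT, hTc⟩ :=
      exists_isFinalSegment_card_eq (show c - 1 ≤ #(uncovered s Q) by omega)
    have haT : a ∉ T := fun h => (hmax a (mem_uncovered.1 (hT.subset h)).1).false
    have haQ := ((IsGaplessNoncrossing.insert_iff hmax).1 (mem_gaplessNoncrossing.1 hQ).1).2
    have hcard : #(insert a T) = c := by rw [card_insert_of_notMem haT]; omega
    have hmem := insert_mem_gaplessNoncrossing hmax hQ hT
    rw [hcard, Multiset.cons_erase hc] at hmem
    refine ⟨_, mem_filter.2 ⟨hmem, _, mem_insert_self _ _, mem_insert_self _ _, hcard⟩, ?_⟩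
    rw [filter_insert, if_neg (by simp), filter_true_of_mem haQ]

theorem filter_forall_notMem_gaplessNoncrossing (hmax : ∀ x ∈ s, x < a) :
    {P ∈ gaplessNoncrossing (insert a s) M | ∀ B ∈ P, a ∉ B} = gaplessNoncrossing s M := by
  ext P
  rw [mem_filter, mem_gaplessNoncrossing, mem_gaplessNoncrossing,
    IsGaplessNoncrossing.insert_iff hmax, and_right_comm]

theorem card_filter_exists_mem_gaplessNoncrossing (hmax : ∀ x ∈ s, x < a) (h0 : 0 ∉ M)
    (hM : M.sum ≤ #s + 1) :
    #{P ∈ gaplessNoncrossing (insert a s) M | ¬ ∀ B ∈ P, a ∉ B} =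
      ∑ c ∈ M.toFinset, #(gaplessNoncrossing s (M.erase c)) := by
  have hunion : {P ∈ gaplessNoncrossing (insert a s) M | ¬ ∀ B ∈ P, a ∉ B} =
      M.toFinset.biUnion fun c =>
        {P ∈ gaplessNoncrossing (insert a s) M | ∃ B ∈ P, a ∈ B ∧ #B = c} := by
    ext P
    simp only [mem_filter, mem_biUnion, Multiset.mem_toFinset, not_forall, not_not, exists_prop]
    constructor
    · rintro ⟨hP, B, hB, ha⟩
      refine ⟨#B, ?_, hP, B, hB, ha, rfl⟩
      rw [← (mem_gaplessNoncrossing.1 hP).2]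
      exact Multiset.mem_map_of_mem card hB
    · rintro ⟨c, -, hP, B, hB, ha, -⟩
      exact ⟨hP, B, hB, ha⟩
  rw [hunion, card_biUnion]
  · refine sum_congr rfl fun c hc => ?_
    rw [Multiset.mem_toFinset] at hc
    exact card_filter_exists_mem_card_eq hmax hc (ne_of_mem_of_not_mem hc h0) hM
  · intro c _ c' _ hne
    refine disjoint_filter.2 ?_
    rintro P hP ⟨B, hB, ha, rfl⟩ ⟨B', hB', ha', rfl⟩
    have hdisj := (mem_gaplessNoncrossing.1 hP).1.pairwiseDisjoint
    exact hne (congrArg card (hdisj.elim_finset hB hB' a ha ha'))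

theorem card_gaplessNoncrossing_insert (hmax : ∀ x ∈ s, x < a) (h0 : 0 ∉ M)
    (hM : M.sum ≤ #s + 1) :
    #(gaplessNoncrossing (insert a s) M) =
      #(gaplessNoncrossing s M) + ∑ c ∈ M.toFinset, #(gaplessNoncrossing s (M.erase c)) := by
  rw [← card_filter_add_card_filter_not fun P => ∀ B ∈ P, a ∉ B,
    filter_forall_notMem_gaplessNoncrossing hmax,
    card_filter_exists_mem_gaplessNoncrossing hmax h0 hM]

theorem exists_finpartition_parts_eq (h0 : 0 ∉ M) (hM : M.sum = #s)
    (hP : P ∈ gaplessNoncrossing s M) : ∃ π : Finpartition s, π.parts = P := by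
  have huncovered : uncovered s P = ∅ := by
    have hsum := sum_add_card_uncovered hP
    exact card_eq_zero.1 (by omega)
  obtain ⟨h, rfl⟩ := mem_gaplessNoncrossing.1 hP
  refine ⟨⟨P, supIndep_iff_pairwiseDisjoint.2 h.pairwiseDisjoint, ?_, ?_⟩, rfl⟩
  · rw [sup_eq_biUnion]
    exact (biUnion_subset.2 h.subset).antisymm (sdiff_eq_empty_iff_subset.1 huncovered)
  · exact fun hbot => h0 (Multiset.mem_map.2 ⟨⊥, hbot, card_empty⟩)

end GaplessNoncrossing

section Multiset

theorem prod_factorial_count_eq_count_mul_erase {β : Type*} [DecidableEq β] {M : Multiset β} {c : β}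
    (hc : c ∈ M) :
    ∏ d ∈ M.toFinset, (M.count d)! =
      M.count c * ∏ d ∈ (M.erase c).toFinset, ((M.erase c).count d)! := by
  have hsupport : ∏ d ∈ (M.erase c).toFinset, ((M.erase c).count d)! =
      ∏ d ∈ M.toFinset, ((M.erase c).count d)! := by
    refine prod_subset (Multiset.toFinset_subset.2 (Multiset.erase_subset c M)) fun d _ hd => ?_
    rw [Multiset.count_eq_zero_of_notMem (mt Multiset.mem_toFinset.2 hd), Nat.factorial_zero]
  have hcM := Multiset.mem_toFinset.2 hc
  rw [hsupport, ← mul_prod_erase _ _ hcM, ← mul_prod_erase _ _ hcM, ← mul_assoc,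
    Multiset.count_erase_self, Nat.mul_factorial_pred (Multiset.count_pos.2 hc).ne']
  congr 1
  exact prod_congr rfl fun d hd => by rw [Multiset.count_erase_of_ne (ne_of_mem_erase hd)]

theorem sum_count_mul_add (M : Multiset ℕ) (k : ℕ) :
    ∑ c ∈ M.toFinset, M.count c * (k + c) = M.card * k + M.sum := by
  simp only [mul_add, sum_add_distrib, ← sum_mul, Multiset.toFinset_sum_count_eq,
    sum_multiset_count M, smul_eq_mul]

theorem multiset_card_le_sum {M : Multiset ℕ} (h0 : 0 ∉ M) : M.card ≤ M.sum := by
  simpa using Multiset.card_nsmul_le_sum (s := M) (a := 1) fun c hc =>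
    Nat.one_le_iff_ne_zero.2 (ne_of_mem_of_not_mem hc h0)

end Multiset

section Counting

variable {α : Type*} [LinearOrder α] {s : Finset α} {M : Multiset ℕ}

theorem gaplessNoncrossing_empty_zero : gaplessNoncrossing (∅ : Finset α) 0 = {∅} := by
  ext P
  rw [mem_gaplessNoncrossing, mem_singleton, Multiset.map_eq_zero, val_eq_zero]
  refine ⟨And.right, ?_⟩
  rintro rfl
  exact ⟨⟨by simp, by simp, by simp, by simp⟩, rfl⟩

theorem card_gaplessNoncrossing_empty_mul {k j : ℕ} (h0 : 0 ∉ M) (hk : M.sum + k = 1)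
    (hj : M.card + j = 1) :
    #(gaplessNoncrossing (∅ : Finset α) M) * (j ! * ∏ c ∈ M.toFinset, (M.count c)!) = k := by
  have hle := multiset_card_le_sum h0
  rcases Nat.eq_zero_or_pos M.sum with hsum | hsum
  · obtain rfl : M = 0 := Multiset.card_eq_zero.1 (by omega)
    obtain ⟨rfl, rfl⟩ : k = 1 ∧ j = 1 := by simpa using And.intro hk hj
    simp [gaplessNoncrossing_empty_zero]
  · obtain rfl : k = 0 := by omega
    rw [gaplessNoncrossing_eq_empty (by simpa using hsum), card_empty, zero_mul]

/-- In terms of `m = #s`, there are `(m + 1 - M.sum) * m! / ((m + 1 - M.card)! * ∏ c, (M.count c)!)`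
families; `k` and `j` stand for the two differences, so that no subtraction occurs. -/
theorem card_gaplessNoncrossing_mul {k j : ℕ} (h0 : 0 ∉ M) (hk : M.sum + k = #s + 1)
    (hj : M.card + j = #s + 1) :
    #(gaplessNoncrossing s M) * (j ! * ∏ c ∈ M.toFinset, (M.count c)!) = k * (#s)! := by
  induction s using Finset.induction_on_max generalizing M k j with
  | empty => simpa using card_gaplessNoncrossing_empty_mul h0 hk hj
  | insert a s hmax ih =>
    have hle := multiset_card_le_sum h0
    have hs : #(insert a s) = #s + 1 := card_insert_of_notMem fun h => (hmax a h).false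
    rw [hs] at hk hj ⊢
    rcases k with _ | k
    · rw [gaplessNoncrossing_eq_empty (by omega), card_empty, zero_mul, zero_mul]
    obtain ⟨j, rfl⟩ : ∃ i, j = i + 1 := Nat.exists_eq_add_one.2 (by omega)
    set w := ∏ c ∈ M.toFinset, (M.count c)! with hw
    have hwithout : #(gaplessNoncrossing s M) * (j ! * w) = k * (#s)! :=
      ih h0 (by omega) (by omega)
    have hwith : ∀ c ∈ M.toFinset, #(gaplessNoncrossing s (M.erase c)) * ((j + 1)! * w) =
        M.count c * (k + c) * (#s)! := by
      intro c hc
      rw [Multiset.mem_toFinset] at hc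
      have hsum : c + (M.erase c).sum = M.sum := Multiset.sum_erase hc
      have hcard := Multiset.card_erase_add_one hc
      have h0' : 0 ∉ M.erase c := fun h => h0 (Multiset.mem_of_mem_erase h)
      rw [hw, prod_factorial_count_eq_count_mul_erase hc, mul_assoc (M.count c),
        ← ih (k := k + c) (j := j + 1) h0' (by omega) (by omega)]
      ring
    calc #(gaplessNoncrossing (insert a s) M) * ((j + 1)! * w)
      _ = (j + 1) * (#(gaplessNoncrossing s M) * (j ! * w)) +
          ∑ c ∈ M.toFinset, #(gaplessNoncrossing s (M.erase c)) * ((j + 1)! * w) := by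
        rw [card_gaplessNoncrossing_insert hmax h0 (by omega), add_mul, sum_mul, Nat.factorial_succ]
        ring
      _ = ((j + 1 + M.card) * k + M.sum) * (#s)! := by
        rw [hwithout, sum_congr rfl hwith, ← sum_mul, sum_count_mul_add]
        ring
      _ = (k + 1) * (#s + 1)! := by
        rw [Nat.factorial_succ, ← mul_assoc]
        congr 1
        linear_combination k * hj + hk

end Counting

section SetPartition

variable {n : ℕ} {π : SetPartitionOn n} {r : Fin n → ℕ}

theorem noncrossing_iff_isGaplessNoncrossing :
    Noncrossing π ↔ IsGaplessNoncrossing (Icc 1 n) π.parts := by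
  constructor
  · refine fun h => ⟨fun _ => π.le, π.disjoint, ?_,
      fun _ _ _ _ _ _ _ hy _ _ => π.exists_mem hy⟩
    intro B hB B' hB' w x y z hwx hxy hyz hw hy hx hz
    by_contra hne
    exact h ⟨w, x, y, z, hwx, hxy, hyz, B, hB, B', hB', hne, hw, hy, hx, hz⟩
  · rintro h ⟨w, x, y, z, hwx, hxy, hyz, B, hB, B', hB', hne, hw, hy, hx, hz⟩
    exact hne (h.eq_of_crossing hB hB' hwx hxy hyz hw hy hx hz)

/-- The block sizes of a partition of type `r`. The index `i : Fin n` stands for the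
size `i + 1`. -/
def typeSizes (r : Fin n → ℕ) : Multiset ℕ := ∑ i, Multiset.replicate (r i) (i.1 + 1)

theorem count_typeSizes (i : Fin n) : (typeSizes r).count (i.1 + 1) = r i := by
  simp [typeSizes, Multiset.count_sum', Multiset.count_replicate, Fin.val_inj]

theorem mem_typeSizes {c : ℕ} : c ∈ typeSizes r ↔ ∃ i : Fin n, r i ≠ 0 ∧ i.1 + 1 = c := by
  simp [typeSizes, Multiset.mem_sum, Multiset.mem_replicate, eq_comm]

theorem sum_typeSizes : (typeSizes r).sum = ∑ i, (i.1 + 1) * r i := by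
  simp [typeSizes, Multiset.sum_sum, mul_comm]

theorem card_typeSizes : (typeSizes r).card = ∑ i, r i := by
  simp [typeSizes, Multiset.card_sum]

theorem zero_notMem_typeSizes : 0 ∉ typeSizes r := by
  simp [mem_typeSizes]

theorem prod_factorial_count_typeSizes :
    ∏ c ∈ (typeSizes r).toFinset, ((typeSizes r).count c)! = ∏ i, (r i)! := by
  have hsub : (typeSizes r).toFinset ⊆ univ.image fun i : Fin n => i.1 + 1 := by
    intro c hc
    obtain ⟨i, -, rfl⟩ := mem_typeSizes.1 (Multiset.mem_toFinset.1 hc)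
    exact mem_image_of_mem _ (mem_univ i)
  rw [prod_subset hsub, prod_image]
  · simp only [count_typeSizes]
  · exact fun i _ j _ h => Fin.ext (Nat.succ_injective h)
  · intro c _ hc
    rw [Multiset.count_eq_zero_of_notMem (mt Multiset.mem_toFinset.2 hc), Nat.factorial_zero]

theorem hasType_iff : HasType π r ↔ π.parts.val.map card = typeSizes r := by
  have hcount : ∀ c, (π.parts.val.map card).count c = #{B ∈ π.parts | #B = c} := fun c => by
    rw [Multiset.count_map, card_def, filter_val]
    simp only [eq_comm]
  refine ⟨fun h => Multiset.ext.2 fun c => ?_, fun h i => ?_⟩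
  · by_cases hc : ∃ i : Fin n, i.1 + 1 = c
    · obtain ⟨i, rfl⟩ := hc
      rw [hcount, h i, count_typeSizes]
    · have hnot : c ∉ typeSizes r := fun hmem =>
        hc ((mem_typeSizes.1 hmem).imp fun _ => And.right)
      rw [Multiset.count_eq_zero_of_notMem hnot, Multiset.count_eq_zero]
      intro hmem
      obtain ⟨B, hB, rfl⟩ := Multiset.mem_map.1 hmem
      have hpos : 0 < #B := card_pos.2 (π.nonempty_of_mem_parts hB)
      have hle : #B ≤ n := by simpa using card_le_card (π.le hB)
      exact hc ⟨⟨#B - 1, by omega⟩, Nat.sub_add_cancel hpos⟩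
  · rw [← hcount, h, count_typeSizes]

theorem natCard_noncrossing_hasType (hr : ∑ i, (i.1 + 1) * r i = n) :
    Nat.card {π : SetPartitionOn n // Noncrossing π ∧ HasType π r} =
      #(gaplessNoncrossing (Icc 1 n) (typeSizes r)) := by
  have hmem : ∀ π : SetPartitionOn n, Noncrossing π ∧ HasType π r ↔
      π.parts ∈ gaplessNoncrossing (Icc 1 n) (typeSizes r) := fun π => by
    rw [mem_gaplessNoncrossing, noncrossing_iff_isGaplessNoncrossing, hasType_iff]
  rw [← Nat.card_eq_finsetCard]
  refine Nat.card_eq_of_bijective (fun π => ⟨π.1.parts, (hmem π).1 π.2⟩) ⟨?_, ?_⟩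
  · exact fun π π' h => Subtype.ext (Finpartition.ext (congrArg Subtype.val h))
  · rintro ⟨P, hP⟩
    have hsum : (typeSizes r).sum = #(Icc 1 n) := by simp [sum_typeSizes, hr]
    obtain ⟨π, rfl⟩ := exists_finpartition_parts_eq zero_notMem_typeSizes hsum hP
    exact ⟨⟨π, (hmem π).2 hP⟩, rfl⟩

end SetPartition

/-- (Kreweras) The number `N` of noncrossing partitions of `[n]` of type `r` satisfies
`N · (n - |r| + 1)! · r! = n!`. -/
theorem card_noncrossing_of_type (n : ℕ) (hn : 1 ≤ n) (r : Fin n → ℕ)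
    (hrv : ∑ i, (i.1 + 1) * r i = n) :
    Nat.card {π : SetPartitionOn n // Noncrossing π ∧ HasType π r} *
      (n - (∑ i, r i) + 1).factorial * ∏ i, (r i).factorial = n.factorial := by
  have hsum : (typeSizes r).sum = n := sum_typeSizes.trans hrv
  have hcard : (typeSizes r).card = ∑ i, r i := card_typeSizes
  have hle : (typeSizes r).card ≤ (typeSizes r).sum := multiset_card_le_sum zero_notMem_typeSizes
  have hcount := card_gaplessNoncrossing_mul (s := Finset.Icc 1 n) (k := 1)
    (j := n - ∑ i, r i + 1) (zero_notMem_typeSizes (r := r)) (by simp [hsum]) (by simp; omega)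
  rw [prod_factorial_count_typeSizes, Nat.card_Icc, Nat.add_sub_cancel, one_mul] at hcount
  rw [natCard_noncrossing_hasType hrv, mul_assoc, hcount]
end

section
/- Let n ≥ 1 and let r = (r_1, …, r_n) ∈ ℕ^n satisfy r_1 + 2r_2 + ⋯ + n·r_n = n, and set |r| = r_1 + ⋯ + r_n. Then the number N of nonnesting set partitions of [n] of type r satisfies N · (n − |r| + 1)! · r_1! r_2! ⋯ r_n! = n!. -/
/-!
Encode a partition `π` of `[n]` by the word `s_1 … s_n`, where `s_k` is the size of the block of `π`
with least element `k`, or `0` if `k` is not the least element of its block. The blocks with least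
element at most `j` cover `[j]`, so `s_1 + ⋯ + s_j ≥ j`: with a final letter `0` appended, the word
is a Łukasiewicz word. Reconstructing `π` from the word means choosing, for each `c` with `s_c = 0`,
an unfinished block to continue, that is, a pending element to join to `c` by an arc. The partition
is nonnesting exactly when the least pending element is chosen every time (first in, first out), so
every Łukasiewicz word comes from exactly one nonnesting partition.

By the cycle lemma exactly one of the `n + 1` rotations of a word of length `n + 1` and sum `n` is a
Łukasiewicz word. The type of `π` prescribes the multiplicity of each letter, so nonnesting
partitions of type `r` are counted by `1 / (n + 1)` times a multinomial coefficient.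
-/

open Finset

section Words

variable {α β : Type*} [Fintype α] [DecidableEq β] {c : β → ℕ} {w : α → β}

/-- The word `w`, with positions in `α` and letters in `β`, contains each letter `b` exactly `c b`
times. -/
def HasContent (c : β → ℕ) (w : α → β) : Prop :=
  ∀ b, #{a | w a = b} = c b

lemma HasContent.card_fiber (hw : HasContent c w) (b : β) :
    Fintype.card {a // w a = b} = c b := by
  rw [Fintype.card_subtype, hw b]

lemma hasContent_comp_perm_iff (σ : Equiv.Perm α) : HasContent c (w ∘ σ) ↔ HasContent c w :=
  forall_congr' fun b ↦ by
    rw [← Fintype.card_subtype, ← Fintype.card_subtype,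
      Fintype.card_congr (σ.subtypeEquiv fun _ ↦ Iff.rfl : {a // (w ∘ σ) a = b} ≃ {a // w a = b})]

lemma HasContent.orbit_eq (hw : HasContent c w) :
    MulAction.orbit (Equiv.Perm α)ᵈᵐᵃ w = {v | HasContent c v} := by
  ext v
  constructor
  · rintro ⟨σ, rfl⟩
    exact (hasContent_comp_perm_iff (DomMulAct.mk.symm σ)).2 hw
  · intro hv
    have e (b : β) : {a // v a = b} ≃ {a // w a = b} :=
      Fintype.equivOfCardEq ((hv.card_fiber b).trans (hw.card_fiber b).symm)
    exact ⟨DomMulAct.mk (Equiv.ofFiberEquiv e), funext (Equiv.ofFiberEquiv_map e)⟩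

variable [Fintype β]

lemma HasContent.sum_comp {M : Type*} [AddCommMonoid M] (hw : HasContent c w) (f : β → M) :
    ∑ a, f (w a) = ∑ b, c b • f b := by
  rw [← sum_fiberwise' univ w f]
  exact sum_congr rfl fun b _ ↦ by rw [sum_const, hw b]

lemma HasContent.card_stabilizer (hw : HasContent c w) :
    Nat.card (MulAction.stabilizer (Equiv.Perm α)ᵈᵐᵃ w) = ∏ b, (c b).factorial := by
  classical
  rw [Nat.card_congr (DomMulAct.mk.symm.subtypeEquiv fun _ ↦ DomMulAct.mem_stabilizer_iff :
      MulAction.stabilizer (Equiv.Perm α)ᵈᵐᵃ w ≃ {σ : Equiv.Perm α // w ∘ σ = w}),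
    Nat.card_eq_fintype_card, DomMulAct.stabilizer_card]
  simp only [hw.card_fiber]

lemma exists_hasContent (hc : ∑ b, c b = Fintype.card α) : ∃ w : α → β, HasContent c w := by
  have e : α ≃ Σ b, Fin (c b) := Fintype.equivOfCardEq (by simp [hc])
  refine ⟨fun a ↦ (e a).1, fun b ↦ ?_⟩
  have fiber : {a // (e a).1 = b} ≃ Fin (c b) :=
    (e.subtypeEquiv fun _ ↦ Iff.rfl).trans (Equiv.sigmaSubtype b)
  rw [← Fintype.card_subtype, Fintype.card_congr fiber, Fintype.card_fin]

theorem card_hasContent_mul_prod_factorial (hc : ∑ b, c b = Fintype.card α) :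
    Nat.card {w : α → β // HasContent c w} * ∏ b, (c b).factorial =
      (Fintype.card α).factorial := by
  classical
  obtain ⟨w, hw⟩ := exists_hasContent hc
  have orbit_stabilizer := (MulAction.stabilizer (Equiv.Perm α)ᵈᵐᵃ w).index_mul_card
  rwa [MulAction.index_stabilizer, hw.orbit_eq, hw.card_stabilizer,
    Nat.card_congr DomMulAct.mk.symm, Nat.card_eq_fintype_card,
    Fintype.card_perm] at orbit_stabilizer

end Words

section CycleLemma

lemma card_eq_card_mul_card_of_existsUnique {ι X : Type*} {P : X → Prop} (e : ι → X ≃ X)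
    (h : ∀ x, ∃! i, P (e i x)) : Nat.card X = Nat.card ι * Nat.card {x // P x} := by
  rw [← Nat.card_prod]
  let unrotate (p : ι × {x // P x}) : X := (e p.1).symm p.2
  refine (Nat.card_eq_of_bijective unrotate ⟨?_, fun x ↦ ?_⟩).symm
  · rintro ⟨i, x, hx⟩ ⟨j, y, hy⟩ (hxy : (e i).symm x = (e j).symm y)
    obtain rfl : i = j :=
      (h ((e i).symm x)).unique (by simpa using hx) (by simpa [hxy] using hy)
    simpa using hxy
  · obtain ⟨i, hi, -⟩ := h x
    exact ⟨⟨i, e i x, hi⟩, (e i).symm_apply_apply x⟩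

-- `T = N * S + id` has period `N` and takes distinct values at distinct residues. As `S` is
-- integral and `0 ≤ j < N`, comparing `S` at `k` and `k + j` is the same as comparing `T` there.
lemma existsUnique_forall_le_add {N : ℕ} (hN : 0 < N) {S : ℕ → ℤ}
    (hS : ∀ m, S (m + N) = S m - 1) :
    ∃! k : Fin N, ∀ j < N, S k ≤ S (k + j) := by
  let T (m : ℕ) : ℤ := N * S m + m
  have T_periodic : Function.Periodic T N := fun m ↦ by simp only [T, hS]; push_cast; ring
  have le_iff {k j : ℕ} (hj : j < N) : S k ≤ S (k + j) ↔ T k ≤ T (k + j) := by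
    simp only [T]
    push_cast
    constructor <;> intro h
    · nlinarith
    · by_contra! hlt
      nlinarith
  have T_injective : Function.Injective fun k : Fin N ↦ T k := fun k l hkl ↦ by
    have hmod : ((k : ℕ) : ℤ) ≡ (l : ℕ) [ZMOD N] :=
      Int.modEq_iff_dvd.2 ⟨S k - S l, by simp only [T] at hkl; linear_combination -hkl⟩
    exact Fin.ext (Nat.ModEq.eq_of_lt_of_lt (Int.natCast_modEq_iff.1 hmod) k.2 l.2)
  have isMin_iff (k : Fin N) : (∀ j < N, S k ≤ S (k + j)) ↔ ∀ l : Fin N, T k ≤ T l := by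
    refine ⟨fun h l ↦ ?_, fun h j hj ↦ (le_iff hj).2 ?_⟩
    · rcases le_or_gt k l with hkl | hlk
      · have := (le_iff (by omega)).1 (h (l - k) (by omega))
        rwa [Nat.add_sub_cancel' hkl] at this
      · have := (le_iff (by omega)).1 (h (l + N - k) (by omega))
        rwa [Nat.add_sub_cancel' (by omega), T_periodic] at this
    · rw [← T_periodic.map_mod_nat (k + j)]
      exact h ⟨_, Nat.mod_lt _ hN⟩
  have : Nonempty (Fin N) := ⟨0, hN⟩
  obtain ⟨k, hk⟩ := Finite.exists_min fun k : Fin N ↦ T k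
  simp only [isMin_iff]
  exact ⟨k, hk, fun l hl ↦ T_injective ((hl k).antisymm (hk l))⟩

variable {n : ℕ} {β : Type*} [Fintype β] [DecidableEq β] {c : β → ℕ}

/-- `w` is a Łukasiewicz word: every prefix of length `j` has sum at least `j`. Positions are read
in the cyclic order `1, …, n, 0`, so that position `i ≥ 1` of the word can stand for the element
`i` of `[n]`, and the condition ignores the last position `0`. -/
def IsLukasiewicz (w : Fin (n + 1) → ℕ) : Prop :=
  ∀ j ≤ n, j ≤ ∑ i ∈ Icc 1 j, w (Fin.ofNat (n + 1) i)

/-- The height after `m` steps of the walk with steps `w 1 - 1, …, w n - 1, w 0 - 1, w 1 - 1, …`,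
the word being repeated periodically. -/
def walkHeight (w : Fin (n + 1) → ℕ) (m : ℕ) : ℤ :=
  ∑ i ∈ Icc 1 m, (w (Fin.ofNat (n + 1) i) : ℤ) - m

lemma isLukasiewicz_iff_walkHeight_nonneg {w : Fin (n + 1) → ℕ} :
    IsLukasiewicz w ↔ ∀ j < n + 1, 0 ≤ walkHeight w j := by
  simp only [IsLukasiewicz, walkHeight, Nat.lt_succ_iff, sub_nonneg, ← Nat.cast_sum, Nat.cast_le]

lemma walkHeight_succ (w : Fin (n + 1) → ℕ) (m : ℕ) :
    walkHeight w (m + 1) = walkHeight w m + w (Fin.ofNat (n + 1) (m + 1)) - 1 := by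
  rw [walkHeight, walkHeight, sum_Icc_succ_top (by omega)]
  push_cast
  ring

lemma walkHeight_add (w : Fin (n + 1) → ℕ) (k : Fin (n + 1)) (j : ℕ) :
    walkHeight w (k + j) = walkHeight w k + walkHeight (fun i ↦ w (i + k)) j := by
  induction j with
  | zero => simp [walkHeight]
  | succ j ih =>
    have ofNat_add : Fin.ofNat (n + 1) (k + j + 1) = Fin.ofNat (n + 1) (j + 1) + k := by
      ext
      simp [Fin.val_add, add_comm, add_left_comm, add_assoc]
    rw [← add_assoc, walkHeight_succ, walkHeight_succ, ih, ofNat_add]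
    ring

lemma sum_eq_add_sum_Icc_ofNat (w : Fin (n + 1) → ℕ) :
    ∑ i, w i = w 0 + ∑ i ∈ Icc 1 n, w (Fin.ofNat (n + 1) i) := by
  have sum_range := Fin.sum_univ_eq_sum_range (fun i ↦ w (Fin.ofNat (n + 1) i)) (n + 1)
  simp only [Fin.ofNat_eq_cast, Fin.cast_val_eq_self] at sum_range
  rw [sum_range, sum_range_eq_add_Ico _ n.add_one_pos, Ico_add_one_right_eq_Icc]
  rfl

lemma walkHeight_add_period {w : Fin (n + 1) → ℕ} (hw : ∑ i, w i = n) (m : ℕ) :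
    walkHeight w (m + (n + 1)) = walkHeight w m - 1 := by
  induction m with
  | zero =>
    have total : (w 0 : ℤ) + ∑ i ∈ Icc 1 n, (w (Fin.ofNat (n + 1) i) : ℤ) = n := by
      exact_mod_cast (sum_eq_add_sum_Icc_ofNat w).symm.trans hw
    have last : Fin.ofNat (n + 1) (n + 1) = 0 := by simp
    rw [zero_add, walkHeight_succ, last]
    simp only [walkHeight, CharP.cast_eq_zero, Icc_eq_empty_of_lt, zero_lt_one, sum_empty]
    linarith
  | succ m ih =>
    have ofNat_period : Fin.ofNat (n + 1) (m + (n + 1) + 1) = Fin.ofNat (n + 1) (m + 1) := by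
      ext
      simp [add_right_comm]
    rw [add_right_comm, walkHeight_succ, walkHeight_succ, ih, ofNat_period]
    ring

theorem existsUnique_isLukasiewicz_rotate {w : Fin (n + 1) → ℕ} (hw : ∑ i, w i = n) :
    ∃! k, IsLukasiewicz fun i ↦ w (i + k) := by
  simpa only [isLukasiewicz_iff_walkHeight_nonneg, walkHeight_add, le_add_iff_nonneg_right] using
    existsUnique_forall_le_add n.succ_pos (walkHeight_add_period hw)

theorem card_isLukasiewicz_mul_prod_factorial {v : β → ℕ} (hc : ∑ b, c b = n + 1)
    (hv : ∑ b, c b * v b = n) :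
    Nat.card {w : Fin (n + 1) → β // HasContent c w ∧ IsLukasiewicz (v ∘ w)} *
      ∏ b, (c b).factorial = n.factorial := by
  let rotate (k : Fin (n + 1)) :
      {w : Fin (n + 1) → β // HasContent c w} ≃ {w : Fin (n + 1) → β // HasContent c w} :=
    ((Equiv.addRight k).symm.arrowCongr (Equiv.refl β)).subtypeEquiv fun _ ↦
      (hasContent_comp_perm_iff (Equiv.addRight k)).symm
  have cycle_lemma := card_eq_card_mul_card_of_existsUnique
    (P := fun w ↦ IsLukasiewicz (v ∘ w.1)) rotate fun w ↦
      existsUnique_isLukasiewicz_rotate (w := v ∘ w.1) (by simpa [hv] using w.2.sum_comp v)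
  have total := card_hasContent_mul_prod_factorial (α := Fin (n + 1)) (by simpa using hc)
  rw [cycle_lemma, Nat.card_fin, Fintype.card_fin, Nat.factorial_succ, mul_assoc,
    Nat.card_congr (Equiv.subtypeSubtypeEquivSubtypeInter _ fun w ↦ IsLukasiewicz (v ∘ w))] at total
  exact Nat.eq_of_mul_eq_mul_left n.succ_pos total

end CycleLemma

section Fifo

variable {n : ℕ} {u v f g : ℕ → ℕ} {c p : ℕ}

/-- View a labelling `f` as sorting `1, 2, …` into classes, the class of `x` being named by its
label `f x` and having capacity `u (f x)`. The element `p < c` is pending at time `c` if it is the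
last element below `c` of its class, and this class still has room. -/
def IsPending (u f : ℕ → ℕ) (c p : ℕ) : Prop :=
  p ∈ Ico 1 c ∧ (∀ y ∈ Ioo p c, f y ≠ f p) ∧ #{x ∈ Ico 1 c | f x = f p} < u (f p)

/-- The labelling `f` obeys the first-in-first-out rule with capacities `u` at `c`: if `c` has
positive capacity then `c` opens a class of its own, and otherwise `c` joins the class of the least
pending element. -/
def IsFifoAt (u f : ℕ → ℕ) (c : ℕ) : Prop :=
  (u c ≠ 0 → f c = c) ∧ (u c = 0 → ∃ p, IsLeast {p | IsPending u f c p} p ∧ f c = f p)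

/-- The labelling `f` obeys the first-in-first-out rule with capacities `u` on `[n]`. -/
def IsFifo (u f : ℕ → ℕ) (n : ℕ) : Prop :=
  ∀ c ∈ Icc 1 n, IsFifoAt u f c

lemma isPending_congr (hf : ∀ x ∈ Ico 1 c, f x = g x) (hu : ∀ x ∈ Ico 1 c, u (f x) = v (f x)) :
    IsPending u f c p ↔ IsPending v g c p := by
  refine and_congr_right fun hp ↦ and_congr (forall₂_congr fun y hy ↦ ?_) ?_
  · rw [hf p hp, hf y (by grind)]
  · rw [hu p hp, hf p hp, filter_congr fun x hx ↦ by rw [hf x hx]]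

lemma IsFifoAt.congr (h : IsFifoAt u f c) (hc : u c = v c) (hf : ∀ x ∈ Icc 1 c, f x = g x)
    (hu : ∀ x ∈ Ico 1 c, u (f x) = v (f x)) (hc1 : 1 ≤ c) : IsFifoAt v g c := by
  have hf' : ∀ x ∈ Ico 1 c, f x = g x := fun x hx ↦ hf x (Ico_subset_Icc_self hx)
  have hfc : f c = g c := hf c (right_mem_Icc.2 hc1)
  rw [IsFifoAt, hc, hfc] at h
  refine h.imp_right fun h hc ↦ ?_
  obtain ⟨p, hp, hcp⟩ := h hc
  simp only [isPending_congr hf' hu] at hp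
  exact ⟨p, hp, hcp.trans (hf' p hp.1.1)⟩

theorem IsFifo.label_eq (hf : IsFifo u f n) (hg : IsFifo u g n) (hc : c ∈ Icc 1 n) : f c = g c := by
  induction c using Nat.strong_induction_on with
  | _ c ih =>
    have agree : ∀ x ∈ Ico 1 c, f x = g x := fun x hx ↦ ih x (by grind) (by grind)
    by_cases huc : u c = 0
    · obtain ⟨p, hp, hfp⟩ := (hf c hc).2 huc
      obtain ⟨q, hq, hgq⟩ := (hg c hc).2 huc
      simp only [isPending_congr agree fun _ _ ↦ rfl] at hp
      obtain rfl := hp.unique hq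
      rw [hfp, hgq, agree p hp.1.1]
    · rw [(hf c hc).1 huc, (hg c hc).1 huc]

section Properties

variable (hf : IsFifo u f n)
include hf

lemma IsFifo.label_mem_Icc (hc : c ∈ Icc 1 n) : f c ∈ Icc 1 c := by
  induction c using Nat.strong_induction_on with
  | _ c ih =>
    by_cases huc : u c = 0
    · obtain ⟨p, ⟨⟨hp, -⟩, -⟩, hcp⟩ := (hf c hc).2 huc
      grind
    · grind [(hf c hc).1 huc]

lemma IsFifo.capacity_ne_zero (hc : c ∈ Icc 1 n) : u (f c) ≠ 0 := by
  by_cases huc : u c = 0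
  · obtain ⟨p, ⟨⟨-, -, hp⟩, -⟩, hcp⟩ := (hf c hc).2 huc
    rw [hcp]
    exact Nat.ne_zero_of_lt hp
  · rwa [(hf c hc).1 huc]

lemma IsFifo.label_label (hc : c ∈ Icc 1 n) : f (f c) = f c :=
  (hf (f c) (by grind [hf.label_mem_Icc hc])).1 (hf.capacity_ne_zero hc)

lemma IsFifo.card_fiber_le {j : ℕ} (hj : j ≤ n) (m : ℕ) :
    #{x ∈ Icc 1 j | f x = m} ≤ u m := by
  induction j with
  | zero => simp
  | succ j ih =>
    have hj' : j + 1 ∈ Icc 1 n := by grind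
    rw [← insert_Icc_right_eq_Icc_add_one (by omega), filter_insert]
    split_ifs with hm
    · rw [card_insert_of_notMem (by simp)]
      by_cases huj : u (j + 1) = 0
      · obtain ⟨p, ⟨⟨-, -, hp⟩, -⟩, hjp⟩ := (hf _ hj').2 huj
        rw [Ico_add_one_right_eq_Icc, ← hjp, hm] at hp
        exact hp
      · obtain rfl : j + 1 = m := ((hf _ hj').1 huj).symm.trans hm
        have no_earlier : ∀ x ∈ Icc 1 j, f x ≠ j + 1 := fun x hx ↦ by
          have := hf.label_mem_Icc (c := x) (by grind)
          grind
        rw [filter_false_of_mem no_earlier]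
        exact Nat.one_le_iff_ne_zero.2 huj
    · exact ih (by omega)

lemma IsFifo.sum_card_fiber : ∑ m ∈ Icc 1 n, #{x ∈ Icc 1 n | f x = m} = n := by
  rw [← card_eq_sum_card_fiberwise fun x hx ↦ ?_, Nat.card_Icc, Nat.add_sub_cancel]
  have := hf.label_mem_Icc hx
  grind

lemma IsFifo.card_fiber_eq (hu : ∑ k ∈ Icc 1 n, u k = n) {m : ℕ} (hm : m ∈ Icc 1 n) :
    #{x ∈ Icc 1 n | f x = m} = u m :=
  (sum_eq_sum_iff_of_le fun m _ ↦ hf.card_fiber_le le_rfl m).1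
    ((hf.sum_card_fiber).trans hu.symm) m hm

lemma IsFifo.exists_isPending (hu : n < ∑ k ∈ Icc 1 n, u k) : ∃ p, IsPending u f (n + 1) p := by
  obtain ⟨m, hm, room⟩ : ∃ m ∈ Icc 1 n, #{x ∈ Icc 1 n | f x = m} < u m :=
    exists_lt_of_sum_lt (by rwa [hf.sum_card_fiber])
  have label_m : f m = m := (hf m hm).1 (Nat.ne_zero_of_lt room)
  obtain ⟨p, hp, p_last⟩ :=
    exists_max_image {x ∈ Icc 1 n | f x = m} id ⟨m, mem_filter.2 ⟨hm, label_m⟩⟩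
  obtain ⟨hpn, rfl⟩ := mem_filter.1 hp
  rw [← Ico_add_one_right_eq_Icc] at hpn room
  refine ⟨p, hpn, fun y hy hyp ↦ ?_, room⟩
  exact (mem_Ioo.1 hy).1.not_ge (p_last y (mem_filter.2 ⟨by grind, hyp⟩))

lemma IsFifo.exists_isFifoAt_extension (hu : n + 1 ≤ ∑ k ∈ Icc 1 (n + 1), u k) :
    ∃ g : ℕ → ℕ, (∀ x ∈ Icc 1 n, f x = g x) ∧ IsFifoAt u g (n + 1) := by
  have agree (a : ℕ) : ∀ x ∈ Ico 1 (n + 1), f x = Function.update f (n + 1) a x :=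
    fun x hx ↦ (Function.update_of_ne (by grind) _ _).symm
  by_cases hun : u (n + 1) = 0
  · rw [sum_Icc_succ_top (by omega), hun, add_zero] at hu
    let p := sInf {p | IsPending u f (n + 1) p}
    have hp : IsLeast {p | IsPending u f (n + 1) p} p :=
      ⟨Nat.sInf_mem (hf.exists_isPending hu), fun _ ↦ Nat.sInf_le⟩
    refine ⟨Function.update f (n + 1) (f p), fun x hx ↦ agree _ x (by grind),
      fun h ↦ (h hun).elim, fun _ ↦ ⟨p, ?_, ?_⟩⟩
    · simpa only [isPending_congr (agree (f p)) fun _ _ ↦ rfl] using hp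
    · rw [Function.update_self, ← agree _ p hp.1.1]
  · exact ⟨Function.update f (n + 1) (n + 1), fun x hx ↦ agree _ x (by grind),
      fun _ ↦ Function.update_self .., fun h ↦ (hun h).elim⟩

end Properties

theorem exists_isFifo (hu : ∀ j ≤ n, j ≤ ∑ k ∈ Icc 1 j, u k) : ∃ f, IsFifo u f n := by
  induction n with
  | zero => exact ⟨id, by simp [IsFifo]⟩
  | succ n ih =>
    obtain ⟨f, hf⟩ := ih fun j hj ↦ hu j (by omega)
    obtain ⟨g, hfg, hg⟩ := hf.exists_isFifoAt_extension (hu (n + 1) le_rfl)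
    refine ⟨g, fun c hc ↦ ?_⟩
    rcases eq_or_ne c (n + 1) with rfl | hcn
    · exact hg
    · exact (hf c (by grind)).congr rfl (fun x hx ↦ hfg x (by grind)) (fun _ _ ↦ rfl) (by grind)

end Fifo

section BlockMin

variable {n : ℕ} {π π' : SetPartitionOn n} {k x y a c d p : ℕ}

/-- The least element of the block of `π` containing `x`. Outside `[n]` the junk value is `0`. -/
noncomputable def blockMin (π : SetPartitionOn n) (x : ℕ) : ℕ :=
  sInf {y | y ∈ π.part x}

/-- The size of the block of `π` whose least element is `k`, and `0` if there is no such block. -/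
noncomputable def blockSize (π : SetPartitionOn n) (k : ℕ) : ℕ :=
  #{x ∈ Icc 1 n | blockMin π x = k}

lemma blockMin_mem_part (hx : x ∈ Icc 1 n) : blockMin π x ∈ π.part x :=
  Nat.sInf_mem (s := {y | y ∈ π.part x}) ⟨x, π.mem_part_self.2 hx⟩

lemma blockMin_mem_Icc (hx : x ∈ Icc 1 n) : blockMin π x ∈ Icc 1 x := by
  have hmem := π.part_subset x (blockMin_mem_part hx)
  exact mem_Icc.2 ⟨(mem_Icc.1 hmem).1, Nat.sInf_le (π.mem_part_self.2 hx)⟩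

lemma part_blockMin (hx : x ∈ Icc 1 n) : π.part (blockMin π x) = π.part x :=
  π.part_eq_of_mem (π.part_mem.2 hx) (blockMin_mem_part hx)

lemma blockMin_blockMin (hx : x ∈ Icc 1 n) : blockMin π (blockMin π x) = blockMin π x := by
  rw [blockMin, part_blockMin hx, ← blockMin]

lemma blockMin_eq_blockMin_iff (hx : x ∈ Icc 1 n) (hy : y ∈ Icc 1 n) :
    blockMin π x = blockMin π y ↔ x ∈ π.part y := by
  rw [π.mem_part_iff_part_eq_part hx hy]
  refine ⟨fun h ↦ ?_, fun h ↦ by rw [blockMin, h, ← blockMin]⟩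
  rw [← part_blockMin hx, h, part_blockMin hy]

lemma mem_part_iff_blockMin_eq (hy : y ∈ Icc 1 n) :
    x ∈ π.part y ↔ x ∈ Icc 1 n ∧ blockMin π x = blockMin π y := by
  refine ⟨fun h ↦ ?_, fun ⟨hx, h⟩ ↦ (blockMin_eq_blockMin_iff hx hy).1 h⟩
  exact ⟨π.part_subset y h, (blockMin_eq_blockMin_iff (π.part_subset y h) hy).2 h⟩

lemma eq_of_blockMin_eq (h : ∀ x ∈ Icc 1 n, blockMin π x = blockMin π' x) : π = π' := by
  have part_eq : ∀ x ∈ Icc 1 n, π.part x = π'.part x := fun x hx ↦ by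
    ext y
    rw [mem_part_iff_blockMin_eq hx, mem_part_iff_blockMin_eq hx, h x hx]
    exact and_congr_right fun hy ↦ by rw [h y hy]
  have image_part (ρ : SetPartitionOn n) : ρ.part '' Icc 1 n = ρ.parts :=
    ρ.part_surjOn.image_eq_of_mapsTo fun _ ↦ ρ.part_mem.2
  refine Finpartition.ext (coe_injective ?_)
  rw [← image_part, ← image_part, Set.image_congr part_eq]

lemma isArc_iff :
    IsArc π a d ↔ a ∈ Icc 1 n ∧ d ∈ Icc 1 n ∧ a < d ∧ blockMin π a = blockMin π d ∧
      ∀ y ∈ Ioo a d, blockMin π y ≠ blockMin π a := by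
  constructor
  · rintro ⟨had, B, hB, ha, hd, gap⟩
    obtain rfl := π.part_eq_of_mem hB ha
    have ha' := π.part_subset a ha
    obtain ⟨hd', had'⟩ := (mem_part_iff_blockMin_eq ha').1 hd
    refine ⟨ha', hd', had, had'.symm, fun y hy hya ↦ gap y ?_ (mem_Ioo.1 hy)⟩
    exact (mem_part_iff_blockMin_eq ha').2 ⟨by grind, hya⟩
  · rintro ⟨ha, hd, had, had', gap⟩
    refine ⟨had, π.part a, π.part_mem.2 ha, π.mem_part_self.2 ha,
      (mem_part_iff_blockMin_eq ha).2 ⟨hd, had'.symm⟩, fun y hy hyad ↦ ?_⟩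
    exact gap y (mem_Ioo.2 hyad) ((mem_part_iff_blockMin_eq ha).1 hy).2

lemma exists_blockMin_eq {f : ℕ → ℕ} (hf : ∀ x ∈ Icc 1 n, f x ∈ Icc 1 x)
    (hff : ∀ x ∈ Icc 1 n, f (f x) = f x) :
    ∃ π : SetPartitionOn n, ∀ x ∈ Icc 1 n, blockMin π x = f x := by
  classical
  let π : SetPartitionOn n := Finpartition.ofSetSetoid (Setoid.ker f) (Icc 1 n)
  have mem_part (x y : ℕ) : y ∈ π.part x ↔ x ∈ Icc 1 n ∧ y ∈ Icc 1 n ∧ f x = f y :=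
    Finpartition.mem_part_ofSetSetoid_iff_rel _
  refine ⟨π, fun x hx ↦ IsLeast.csInf_eq ⟨?_, ?_⟩⟩
  · exact (mem_part x _).2 ⟨hx, by grind, (hff x hx).symm⟩
  · intro y hy
    obtain ⟨-, hy, hxy⟩ := (mem_part x y).1 hy
    rw [hxy]
    exact (mem_Icc.1 (hf y hy)).2

lemma blockSize_ne_zero_iff (hk : k ∈ Icc 1 n) : blockSize π k ≠ 0 ↔ blockMin π k = k := by
  rw [blockSize, card_ne_zero]
  constructor
  · rintro ⟨x, hx⟩
    obtain ⟨hxn, rfl⟩ := mem_filter.1 hx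
    exact blockMin_blockMin hxn
  · exact fun h ↦ ⟨k, mem_filter.2 ⟨hk, h⟩⟩

lemma blockSize_eq_zero_of_notMem (hk : k ∉ Icc 1 n) : blockSize π k = 0 := by
  rw [blockSize, card_eq_zero, filter_eq_empty_iff]
  rintro x hx rfl
  have := blockMin_mem_Icc (π := π) hx
  grind

lemma blockSize_le : blockSize π k ≤ n :=
  (card_filter_le _ _).trans_eq (Nat.card_Icc 1 n)

lemma card_part_eq_blockSize (hk : k ∈ Icc 1 n) (h : blockMin π k = k) :
    #(π.part k) = blockSize π k := by
  rw [blockSize]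
  congr 1
  ext x
  rw [mem_part_iff_blockMin_eq hk, h, mem_filter]

lemma le_sum_blockSize {j : ℕ} (hj : j ≤ n) : j ≤ ∑ k ∈ Icc 1 j, blockSize π k := by
  have maps : Set.MapsTo (blockMin π) (Icc 1 j) (Icc 1 j) := fun x hx ↦ by
    have := blockMin_mem_Icc (π := π) (x := x) (by grind)
    grind
  calc j = ∑ k ∈ Icc 1 j, #{x ∈ Icc 1 j | blockMin π x = k} := by
        rw [← card_eq_sum_card_fiberwise maps, Nat.card_Icc, Nat.add_sub_cancel]
    _ ≤ ∑ k ∈ Icc 1 j, blockSize π k := sum_le_sum fun k _ ↦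
        card_le_card (filter_subset_filter _ (Icc_subset_Icc_right hj))

lemma isPending_iff_exists_isArc (hc : c ∈ Icc 1 n) :
    IsPending (blockSize π) (blockMin π) c p ↔ p < c ∧ ∃ d, c ≤ d ∧ IsArc π p d := by
  have before_subset :
      {x ∈ Ico 1 c | blockMin π x = blockMin π p} ⊆ {x ∈ Icc 1 n | blockMin π x = blockMin π p} :=
    filter_subset_filter _ fun x hx ↦ by grind
  constructor
  · rintro ⟨hp, last, room⟩
    let later : Finset ℕ := {x ∈ Icc c n | blockMin π x = blockMin π p}
    have later_nonempty : later.Nonempty := by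
      obtain ⟨d, hd, hdc⟩ := exists_mem_notMem_of_card_lt_card room
      exact ⟨d, by grind⟩
    obtain ⟨hd, hpd⟩ := mem_filter.1 (later.min'_mem later_nonempty)
    refine ⟨(mem_Ico.1 hp).2, later.min' later_nonempty, (mem_Icc.1 hd).1, isArc_iff.2
      ⟨by grind, by grind, by grind, hpd.symm, fun y hy hyp ↦ ?_⟩⟩
    rcases lt_or_ge y c with hyc | hcy
    · exact last y (by grind) hyp
    · have := later.min'_le y (by grind)
      grind
  · rintro ⟨hpc, d, hcd, harc⟩
    obtain ⟨hp, hd, -, hpd, gap⟩ := isArc_iff.1 harc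
    refine ⟨by grind, fun y hy ↦ gap y (by grind), card_lt_card ⟨before_subset, fun h ↦ ?_⟩⟩
    have := h (mem_filter.2 ⟨hd, hpd.symm⟩)
    grind

lemma exists_isArc_of_blockMin_lt (hc : c ∈ Icc 1 n) (h : blockMin π c < c) :
    ∃ p, IsArc π p c := by
  have h1 := (mem_Icc.1 (blockMin_mem_Icc (π := π) hc)).1
  obtain ⟨p, hp, p_last⟩ := exists_max_image {x ∈ Ico 1 c | blockMin π x = blockMin π c} id
    ⟨blockMin π c, mem_filter.2 ⟨mem_Ico.2 ⟨h1, h⟩, blockMin_blockMin hc⟩⟩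
  obtain ⟨hpc, hp⟩ := mem_filter.1 hp
  refine ⟨p, isArc_iff.2 ⟨by grind, hc, by grind, hp, fun y hy hyp ↦ ?_⟩⟩
  exact (mem_Ioo.1 hy).1.not_ge (p_last y (mem_filter.2 ⟨by grind, hyp.trans hp⟩))

lemma Nonnesting.isFifo (hπ : Nonnesting π) : IsFifo (blockSize π) (blockMin π) n := by
  refine fun c hc ↦ ⟨(blockSize_ne_zero_iff hc).1, fun hc0 ↦ ?_⟩
  have not_min : blockMin π c ≠ c := fun h ↦ (blockSize_ne_zero_iff hc).2 h hc0
  have hlt := (mem_Icc.1 (blockMin_mem_Icc hc)).2.lt_of_ne not_min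
  obtain ⟨p, hpc⟩ := exists_isArc_of_blockMin_lt hc hlt
  refine ⟨p, ⟨(isPending_iff_exists_isArc hc).2 ⟨hpc.1, c, le_rfl, hpc⟩, fun a ha ↦ ?_⟩,
    (isArc_iff.1 hpc).2.2.2.1.symm⟩
  obtain ⟨-, d, hcd, had⟩ := (isPending_iff_exists_isArc hc).1 ha
  by_contra! hap
  rcases hcd.eq_or_lt with rfl | hcd
  · obtain ⟨-, -, -, hac', gap⟩ := isArc_iff.1 had
    obtain ⟨-, -, -, hpc', -⟩ := isArc_iff.1 hpc
    exact gap p (mem_Ioo.2 ⟨hap, hpc.1⟩) (hpc'.trans hac'.symm)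
  · exact hπ ⟨a, p, c, d, hap, hpc.1, hcd, had, hpc⟩

lemma IsFifo.nonnesting (h : IsFifo (blockSize π) (blockMin π) n) : Nonnesting π := by
  rintro ⟨a, b, c, d, hab, hbc, hcd, had, hbc'⟩
  obtain ⟨hb, hc, -, hbc_eq, -⟩ := isArc_iff.1 hbc'
  have not_min : blockSize π c = 0 := by
    by_contra hc0
    have := (mem_Icc.1 (blockMin_mem_Icc (π := π) hb)).2
    grind [(h c hc).1 hc0]
  obtain ⟨p, ⟨⟨-, p_last, -⟩, p_least⟩, hcp⟩ := (h c hc).2 not_min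
  have hpa : p ≤ a := p_least ((isPending_iff_exists_isArc hc).2 ⟨hab.trans hbc, d, hcd.le, had⟩)
  exact p_last b (mem_Ioo.2 ⟨hpa.trans_lt hab, hbc⟩) (hbc_eq.trans hcp)

theorem nonnesting_iff_isFifo : Nonnesting π ↔ IsFifo (blockSize π) (blockMin π) n :=
  ⟨Nonnesting.isFifo, IsFifo.nonnesting⟩

theorem Nonnesting.eq_of_blockSize_eq (hπ : Nonnesting π) (hπ' : Nonnesting π')
    (h : blockSize π = blockSize π') : π = π' := by
  have fifo := nonnesting_iff_isFifo.1 hπ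
  rw [h] at fifo
  exact eq_of_blockMin_eq fun _ ↦ fifo.label_eq (nonnesting_iff_isFifo.1 hπ')

theorem exists_nonnesting_blockSize_eq {u : ℕ → ℕ} (hu : ∀ j ≤ n, j ≤ ∑ k ∈ Icc 1 j, u k)
    (total : ∑ k ∈ Icc 1 n, u k = n) :
    ∃ π : SetPartitionOn n, Nonnesting π ∧ ∀ k ∈ Icc 1 n, blockSize π k = u k := by
  obtain ⟨f, hf⟩ := exists_isFifo hu
  obtain ⟨π, hπ⟩ := exists_blockMin_eq (fun x ↦ hf.label_mem_Icc) fun x ↦ hf.label_label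
  have size_eq : ∀ k ∈ Icc 1 n, blockSize π k = u k := fun k hk ↦ by
    rw [blockSize, filter_congr fun x hx ↦ by rw [hπ x hx], hf.card_fiber_eq total hk]
  refine ⟨π, nonnesting_iff_isFifo.2 fun c hc ↦ ?_, size_eq⟩
  have hmem : ∀ x ∈ Icc 1 n, f x ∈ Icc 1 n := fun x hx ↦ by grind [hf.label_mem_Icc hx]
  exact (hf c hc).congr (size_eq c hc).symm (fun x hx ↦ (hπ x (by grind)).symm)
    (fun x hx ↦ (size_eq _ (hmem x (by grind))).symm) (mem_Icc.1 hc).1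

end BlockMin

section SizeWord

variable {n : ℕ}

/-- The word with letters `blockSize π 1, …, blockSize π n, blockSize π 0 = 0`, in the reading order
of `IsLukasiewicz`. -/
noncomputable def sizeWord (π : SetPartitionOn n) (k : Fin (n + 1)) : Fin (n + 1) :=
  ⟨blockSize π k, Nat.lt_succ_of_le blockSize_le⟩

lemma sizeWord_ofNat (π : SetPartitionOn n) {k : ℕ} (hk : k ≤ n) :
    (sizeWord π (Fin.ofNat (n + 1) k) : ℕ) = blockSize π k := by
  simp only [sizeWord, Fin.val_ofNat, Nat.mod_eq_of_lt (Nat.lt_succ_of_le hk)]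

lemma isLukasiewicz_sizeWord (π : SetPartitionOn n) : IsLukasiewicz (Fin.val ∘ sizeWord π) :=
  fun j hj ↦ (le_sum_blockSize hj).trans_eq <| sum_congr rfl fun k hk ↦
    (sizeWord_ofNat π (by grind)).symm

lemma Nonnesting.eq_of_sizeWord_eq {π π' : SetPartitionOn n} (hπ : Nonnesting π)
    (hπ' : Nonnesting π') (h : sizeWord π = sizeWord π') : π = π' := by
  refine hπ.eq_of_blockSize_eq hπ' (funext fun k ↦ ?_)
  by_cases hk : k ∈ Icc 1 n
  · rw [← sizeWord_ofNat π (mem_Icc.1 hk).2, h, sizeWord_ofNat π' (mem_Icc.1 hk).2]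
  · rw [blockSize_eq_zero_of_notMem hk, blockSize_eq_zero_of_notMem hk]

theorem exists_nonnesting_sizeWord_eq {w : Fin (n + 1) → Fin (n + 1)}
    (hw : IsLukasiewicz (Fin.val ∘ w)) (total : ∑ i, (w i : ℕ) = n) :
    ∃ π : SetPartitionOn n, Nonnesting π ∧ sizeWord π = w := by
  have split := sum_eq_add_sum_Icc_ofNat (Fin.val ∘ w)
  have first_zero : (w 0 : ℕ) = 0 := by
    have := hw n le_rfl
    simp only [Function.comp_apply] at split this
    omega
  simp only [Function.comp_apply, first_zero, zero_add, total] at split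
  obtain ⟨π, hπ, size_eq⟩ := exists_nonnesting_blockSize_eq hw split.symm
  refine ⟨π, hπ, funext fun k ↦ Fin.ext ?_⟩
  rcases eq_or_ne k 0 with rfl | hk
  · rw [first_zero]
    exact blockSize_eq_zero_of_notMem (by simp)
  · have := size_eq k (by have := Fin.pos_iff_ne_zero.2 hk; grind)
    simpa [sizeWord] using this

lemma card_sizeWord_eq_succ (π : SetPartitionOn n) (i : Fin n) :
    #{k | sizeWord π k = i.succ} = #{B ∈ π.parts | #B = i + 1} := by
  have spec (k : Fin (n + 1)) (hk : sizeWord π k = i.succ) :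
      (k : ℕ) ∈ Icc 1 n ∧ blockMin π k = k ∧ #(π.part k) = i + 1 := by
    have size : blockSize π k = i + 1 := congrArg Fin.val hk
    have hk' : (k : ℕ) ∈ Icc 1 n := by
      by_contra hk'
      exact i.1.succ_ne_zero (size.symm.trans (blockSize_eq_zero_of_notMem hk'))
    have is_min := (blockSize_ne_zero_iff hk').1 (size.trans_ne i.1.succ_ne_zero)
    exact ⟨hk', is_min, (card_part_eq_blockSize hk' is_min).trans size⟩
  refine card_bij (fun k _ ↦ π.part k) (fun k hk ↦ ?_) (fun k hk l hl hkl ↦ ?_) fun B hB ↦ ?_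
  · obtain ⟨hk', -, hcard⟩ := spec k (mem_filter.1 hk).2
    exact mem_filter.2 ⟨π.part_mem.2 hk', hcard⟩
  · obtain ⟨-, hkmin, -⟩ := spec k (mem_filter.1 hk).2
    obtain ⟨-, hlmin, -⟩ := spec l (mem_filter.1 hl).2
    rw [Fin.ext_iff, ← hkmin, ← hlmin, blockMin, hkl, ← blockMin]
  · obtain ⟨hB, hcard⟩ := mem_filter.1 hB
    obtain ⟨x, hx⟩ := π.nonempty_of_mem_parts hB
    obtain rfl := π.part_eq_of_mem hB hx
    have hxn := π.part_subset x hx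
    have hmin := blockMin_mem_Icc (π := π) hxn
    have hlt : blockMin π x < n + 1 := by grind
    refine ⟨⟨blockMin π x, hlt⟩, mem_filter.2 ⟨mem_univ _, Fin.ext ?_⟩, part_blockMin hxn⟩
    rw [Fin.val_succ, ← hcard, ← part_blockMin hxn]
    exact (card_part_eq_blockSize (by grind) (blockMin_blockMin hxn)).symm

/-- The content of the size word of a partition of type `r`: the letter `i ≥ 1` occurs `r_i` times,
and the remaining `n + 1 - |r|` positions carry the letter `0`. -/
def typeContent (r : Fin n → ℕ) : Fin (n + 1) → ℕ :=
  Fin.cons (n - ∑ i, r i + 1) r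

lemma sum_typeContent_mul (r : Fin n → ℕ) :
    ∑ i, typeContent r i * (i : ℕ) = ∑ i, (i.1 + 1) * r i := by
  simp [typeContent, Fin.sum_univ_succ, mul_comm]

lemma sum_typeContent {r : Fin n → ℕ} (hr : ∑ i, r i ≤ n) : ∑ i, typeContent r i = n + 1 := by
  simp only [typeContent, Fin.sum_univ_succ, Fin.cons_zero, Fin.cons_succ]
  omega

lemma hasContent_cons_iff {N a : ℕ} {r : Fin n → ℕ} {w : Fin N → Fin (n + 1)}
    (total : a + ∑ i, r i = N) :
    HasContent (Fin.cons a r : Fin (n + 1) → ℕ) w ↔ ∀ i : Fin n, #{k | w k = i.succ} = r i := by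
  have card_word : #{k | w k = 0} + ∑ i : Fin n, #{k | w k = i.succ} = N := by
    rw [← Fin.sum_univ_succ fun b ↦ #{k | w k = b},
      ← card_eq_sum_card_fiberwise fun _ _ ↦ mem_coe.2 (mem_univ _), card_univ, Fintype.card_fin]
  refine ⟨fun h i ↦ h i.succ, fun h ↦ Fin.cases ?_ h⟩
  simp only [h] at card_word
  rw [Fin.cons_zero]
  omega

lemma hasType_iff_hasContent {π : SetPartitionOn n} {r : Fin n → ℕ} (hr : ∑ i, r i ≤ n) :
    HasType π r ↔ HasContent (typeContent r) (sizeWord π) := by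
  rw [typeContent, hasContent_cons_iff (by omega)]
  simp only [HasType, card_sizeWord_eq_succ]

theorem card_nonnesting_hasType_eq {r : Fin n → ℕ} (hr : ∑ i, r i ≤ n)
    (hrv : ∑ i, (i.1 + 1) * r i = n) :
    Nat.card {π : SetPartitionOn n // Nonnesting π ∧ HasType π r} =
      Nat.card {w : Fin (n + 1) → Fin (n + 1) //
        HasContent (typeContent r) w ∧ IsLukasiewicz (Fin.val ∘ w)} := by
  refine Nat.card_eq_of_bijective (fun π ↦
    ⟨sizeWord π.1, (hasType_iff_hasContent hr).1 π.2.2, isLukasiewicz_sizeWord π.1⟩) ⟨?_, ?_⟩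
  · intro π π' h
    exact Subtype.ext (π.2.1.eq_of_sizeWord_eq π'.2.1 (congrArg Subtype.val h))
  · rintro ⟨w, content, luk⟩
    have total : ∑ i, (w i : ℕ) = n := by
      simpa only [smul_eq_mul, sum_typeContent_mul, hrv] using content.sum_comp Fin.val
    obtain ⟨π, hπ, rfl⟩ := exists_nonnesting_sizeWord_eq luk total
    exact ⟨⟨π, hπ, (hasType_iff_hasContent hr).2 content⟩, rfl⟩

end SizeWord

/-- The number `N` of nonnesting partitions of `[n]` of type `r` satisfies
`N · (n - |r| + 1)! · r! = n!`. -/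
theorem card_nonnesting_of_type (n : ℕ) (hn : 1 ≤ n) (r : Fin n → ℕ)
    (hrv : ∑ i, (i.1 + 1) * r i = n) :
    Nat.card {π : SetPartitionOn n // Nonnesting π ∧ HasType π r} *
      (n - (∑ i, r i) + 1).factorial * ∏ i, (r i).factorial = n.factorial := by
  have hr : ∑ i, r i ≤ n :=
    (sum_le_sum fun i _ ↦ Nat.le_mul_of_pos_left (r i) i.1.succ_pos).trans_eq hrv
  have count := card_isLukasiewicz_mul_prod_factorial (sum_typeContent hr)
    ((sum_typeContent_mul r).trans hrv)
  rw [← card_nonnesting_hasType_eq hr hrv, Fin.prod_univ_succ, ← mul_assoc] at count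
  simpa only [typeContent, Fin.cons_zero, Fin.cons_succ] using count
end
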